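/- arXiv:1103.0729 — 3 statements merged into one kernel-verified Lean document; each statement's English description precedes it below -/
import Mathlib

section
/- Let f be a homogeneous polynomial of degree p ≥ 2 on ℝⁿ (f(t·x) = t^p·f(x) for all t ≥ 0 and x). Let γ be a half-trajectory of the unit gradient field of f with f negative and increasing along γ and γ(s) → O, and let ν be its limit of secants. Then f(ν) ≠ 0, and ν is an eigen-vector of Hs(f)(ν) with nonzero eigen-value: Hs(f)(ν)·ν = p(p−1)·f(ν)·ν, where p(p−1)·f(ν) ≠ 0. -/
open scoped RealInnerProductSpace Topology
open Filter

/-!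
Write a point of the trajectory as `γ = r u` with `r = |γ|`, `|u| = 1`. By Euler's identity,
`d log |f u| / d log r = κ(u) / p` with `κ(u) = (|∇f u| / f u) ^ 2 - p ^ 2 ≥ 0`. Hence, for `α > 0`,
`κ(u) |f u| ^ α` cannot stay above a positive constant: `|f u| ^ α` would become negative as
`log r → -∞`. If `f` vanished at the limit `ν` of `u`, Łojasiewicz's inequality
`|f u| ^ e ≤ |∇f u| ^ (e + 1)` would bound `κ(u) |f u| ^ (2 / (e + 1))` from below. So `f ν ≠ 0`,
and then `κ(ν) = 0`, which is the equality case of Cauchy–Schwarz in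
`⟪∇f ν, ν⟫ = p f ν`: the vector `∇f ν` is `p f(ν) ν`. Euler's identity for `∇f` concludes.

For a polynomial `P`, Łojasiewicz's inequality is proved by contradiction in the hyperreals, valued
by Archimedean classes, where the real numbers are a coefficient field. At a point `x` whose
coordinates are finite and algebraic over `ℝ(c)`, with `c = P x` infinitesimal, some derivation `D`
satisfies `v(D c) = v(c)` and makes all `D xᵢ` small, so that `D c = ∑ᵢ ∂ᵢP(x) D xᵢ` forces `∇P(x)`
not to be too small. To reach such a point from an arbitrary finite `y`, replace `y` by a minimizer
`x` of `|∇P| ^ 2 + c ^ 2 |x - a| ^ 2` on the level set `P = c`. If the coordinates of `a` are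
algebraically independent over a countable field containing the coefficients of `P`, the Lagrange
equations make `a` rational in `x` and the multiplier, and counting transcendence degrees shows that
`x` is algebraic over `ℝ(c)`.
-/

/-- `R` is a field of coefficients of the valued field `(F, v)`: it maps isomorphically onto the
residue field. The isomorphism is encoded by `v` being trivial on `R` (injectivity) and by every
element of the valuation ring being congruent to a constant (surjectivity). -/
structure IsCoefficientField (R : Type*) {F Γ₀ : Type*} [Field R] [Field F] [Algebra R F]
    [LinearOrderedCommGroupWithZero Γ₀] (v : Valuation F Γ₀) : Prop where
  valuation_algebraMap : ∀ r : R, r ≠ 0 → v (algebraMap R F r) = 1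
  exists_valuation_sub_lt : ∀ y, v y ≤ 1 → ∃ r : R, v (y - algebraMap R F r) < 1

namespace IsCoefficientField

open Polynomial IntermediateField

variable {R F Γ₀ : Type*} [Field R] [Field F] [Algebra R F] [LinearOrderedCommGroupWithZero Γ₀]
  {v : Valuation F Γ₀} {c : F}

lemma valuation_algebraMap_le_one (hR : IsCoefficientField R v) (r : R) :
    v (algebraMap R F r) ≤ 1 := by
  obtain rfl | hr := eq_or_ne r 0
  · simp
  · exact (hR.valuation_algebraMap r hr).le

lemma valuation_aeval_le_one (hR : IsCoefficientField R v) (hc : v c ≤ 1) (P : R[X]) :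
    v (aeval c P) ≤ 1 := by
  rw [aeval_eq_sum_range]
  refine v.map_sum_le fun i _ => ?_
  rw [Algebra.smul_def, map_mul, map_pow]
  exact mul_le_one' (hR.valuation_algebraMap_le_one _) (pow_le_one' hc _)

lemma valuation_aeval_eq_one (hR : IsCoefficientField R v) (hc : v c < 1) {P : R[X]}
    (hP : P.coeff 0 ≠ 0) : v (aeval c P) = 1 := by
  have hlt : v (c * aeval c P.divX) < 1 := by
    rw [map_mul]
    exact (mul_le_of_le_one_right' (hR.valuation_aeval_le_one hc.le _)).trans_lt hc
  have hconst := hR.valuation_algebraMap _ hP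
  rw [← X_mul_divX_add P, map_add, map_mul, aeval_X, aeval_C,
    v.map_add_eq_of_lt_right (by rwa [hconst]), hconst]

lemma exists_valuation_aeval_eq_pow (hR : IsCoefficientField R v) (hc : v c < 1) {P : R[X]}
    (hP : P ≠ 0) : ∃ m : ℕ, X ^ m ∣ P ∧ v (aeval c P) = v c ^ m := by
  obtain ⟨Q, hPQ, hQ⟩ := P.exists_eq_pow_rootMultiplicity_mul_and_not_dvd hP 0
  rw [map_zero, sub_zero] at hPQ hQ
  refine ⟨P.rootMultiplicity 0, ⟨Q, hPQ⟩, ?_⟩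
  conv_lhs => rw [hPQ]
  rw [map_mul, map_mul, hR.valuation_aeval_eq_one hc (mt X_dvd_iff.mpr hQ), mul_one, map_pow,
    aeval_X, map_pow]

lemma transcendental (hR : IsCoefficientField R v) (hc0 : c ≠ 0) (hc : v c < 1) :
    Transcendental R c := by
  rintro ⟨P, hP, hPc⟩
  obtain ⟨m, -, hm⟩ := hR.exists_valuation_aeval_eq_pow hc hP
  rw [hPc, map_zero, ← map_pow] at hm
  exact pow_ne_zero m hc0 ((v.zero_iff).mp hm.symm)

lemma exists_valuation_eq_zpow_of_mem_adjoin (hR : IsCoefficientField R v) (hc0 : c ≠ 0)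
    (hc : v c < 1) {a : F} (ha : a ∈ R⟮c⟯) (ha0 : a ≠ 0) : ∃ l : ℤ, v a = v c ^ l := by
  obtain ⟨P, Q, rfl⟩ := mem_adjoin_simple_iff R a |>.mp ha
  obtain ⟨hP, hQ⟩ := div_ne_zero_iff.mp ha0
  obtain ⟨m, -, hm⟩ := hR.exists_valuation_aeval_eq_pow hc (P := P) (by rintro rfl; simp at hP)
  obtain ⟨k, -, hk⟩ := hR.exists_valuation_aeval_eq_pow hc (P := Q) (by rintro rfl; simp at hQ)
  refine ⟨m - k, ?_⟩
  rw [map_div₀, hm, hk, zpow_sub₀ (v.ne_zero_iff.mpr hc0), zpow_natCast, zpow_natCast]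

lemma comap (hR : IsCoefficientField R v) {E : Type*} [Field E] [Algebra R E] [Algebra E F]
    [IsScalarTower R E F] : IsCoefficientField R (v.comap (algebraMap E F)) where
  valuation_algebraMap r hr := by
    rw [Valuation.comap_apply, ← IsScalarTower.algebraMap_apply, hR.valuation_algebraMap r hr]
  exists_valuation_sub_lt y hy := by
    obtain ⟨r, hr⟩ := hR.exists_valuation_sub_lt _ hy
    refine ⟨r, ?_⟩
    rwa [Valuation.comap_apply, map_sub, ← IsScalarTower.algebraMap_apply]

variable {π : F}

lemma exists_valuation_sub_le_pow (hR : IsCoefficientField R v) (hπ0 : π ≠ 0)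
    (hgen : ∀ y, v y < 1 → v y ≤ v π) {z : F} (hz : v z ≤ 1) (M : ℕ) :
    ∃ S ∈ Algebra.adjoin R {π}, v (z - S) ≤ v π ^ M := by
  induction M with
  | zero => exact ⟨0, zero_mem _, by simpa using hz⟩
  | succ M ih =>
    obtain ⟨S, hS, hzS⟩ := ih
    obtain ⟨r, hr⟩ := hR.exists_valuation_sub_lt ((z - S) / π ^ M) (by
      rw [map_div₀, map_pow]; exact div_le_one_of_le₀ hzS zero_le)
    refine ⟨S + algebraMap R F r * π ^ M, add_mem hS (mul_mem (Subalgebra.algebraMap_mem _ r)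
      (pow_mem (Algebra.self_mem_adjoin_singleton R π) M)), ?_⟩
    have hsplit : z - (S + algebraMap R F r * π ^ M)
        = ((z - S) / π ^ M - algebraMap R F r) * π ^ M := by
      rw [sub_mul, div_mul_cancel₀ _ (pow_ne_zero M hπ0), sub_sub]
    rw [hsplit, map_mul, map_pow, pow_succ']
    gcongr
    exact hgen _ hr

variable {D : Derivation R F F}

lemma valuation_derivation_le_self (hR : IsCoefficientField R v) (hc : v c < 1) (hD : D c = c)
    {a : F} (ha : a ∈ Algebra.adjoin R {c}) : v (D a) ≤ v a := by
  obtain ⟨P, rfl⟩ := Algebra.adjoin_mem_exists_aeval R c ha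
  obtain rfl | hP := eq_or_ne P 0
  · simp
  obtain ⟨m, hdvd, hm⟩ := hR.exists_valuation_aeval_eq_pow hc hP
  obtain ⟨Q, hQ⟩ : X ^ m ∣ derivative P * X :=
    (pow_dvd_pow X le_tsub_add).trans <|
      pow_succ (X : R[X]) (m - 1) ▸ mul_dvd_mul_right (pow_sub_one_dvd_derivative_of_pow_dvd hdvd) X
  calc v (D (aeval c P)) = v (aeval c (derivative P * X)) := by
        rw [D.map_aeval, hD, smul_eq_mul, map_mul (aeval c), aeval_X]
    _ = v c ^ m * v (aeval c Q) := by rw [hQ, map_mul, map_mul, map_pow, map_pow, aeval_X]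
    _ ≤ v (aeval c P) := hm ▸ mul_le_of_le_one_right' (hR.valuation_aeval_le_one hc.le Q)

lemma valuation_derivation_le (hR : IsCoefficientField R v) (hc : v c < 1) (hD : D c = c)
    {a : F} (ha : a ∈ Algebra.adjoin R {c}) : v (D a) ≤ v c := by
  obtain ⟨P, rfl⟩ := Algebra.adjoin_mem_exists_aeval R c ha
  rw [D.map_aeval, hD, smul_eq_mul, map_mul]
  exact mul_le_of_le_one_left' (hR.valuation_aeval_le_one hc.le _)

end IsCoefficientField

section
open Polynomial

variable {F Γ₀ : Type*} [Field F] [LinearOrderedCommGroupWithZero Γ₀] (v : Valuation F Γ₀)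

lemma exists_valuation_eq_of_sum_eq_zero {ι : Type*} {s : Finset ι} {f : ι → F}
    (hsum : ∑ i ∈ s, f i = 0) {i₀ : ι} (hi₀ : i₀ ∈ s) (hf : f i₀ ≠ 0) :
    ∃ i ∈ s, ∃ j ∈ s, i ≠ j ∧ f i ≠ 0 ∧ v (f i) = v (f j) := by
  classical
  obtain ⟨i, hi, hmax⟩ := s.exists_max_image (fun i => v (f i)) ⟨i₀, hi₀⟩
  have hvi : v (f i) ≠ 0 := ((zero_lt_iff.mpr (v.ne_zero_iff.mpr hf)).trans_le (hmax _ hi₀)).ne'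
  by_contra! hne
  have hlt : ∀ j ∈ s \ {i}, v (f j) < v (f i) := by
    intro j hj
    rw [Finset.mem_sdiff, Finset.mem_singleton] at hj
    exact (hmax j hj.1).lt_of_ne (hne i hi j hj.1 (Ne.symm hj.2) (v.ne_zero_iff.mp hvi)).symm
  have := v.map_sum_eq_of_lt hi hlt
  rw [hsum, map_zero] at this
  exact hvi this.symm

variable {v} {K : Type*} [Field K] [Algebra K F] {g : F}

lemma exists_valuation_pow_eq_zpow (hK : ∀ a : K, a ≠ 0 → ∃ l : ℤ, v (algebraMap K F a) = v g ^ l)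
    {y : F} (hy : y ≠ 0) (hg : g ≠ 0) {P : K[X]} (hP : P ≠ 0) (hPy : aeval y P = 0) :
    ∃ q : ℕ, 0 < q ∧ q ≤ P.natDegree ∧ ∃ l : ℤ, v y ^ q = v g ^ l := by
  rw [aeval_eq_sum_range] at hPy
  obtain ⟨i, hi, j, hj, hij, hne, heq⟩ := exists_valuation_eq_of_sum_eq_zero v hPy
    (Finset.self_mem_range_succ _) (smul_ne_zero (leadingCoeff_ne_zero.mpr hP) (pow_ne_zero _ hy))
  wlog hlt : i < j generalizing i j
  · refine this j hj i hi hij.symm ?_ heq.symm (hij.symm.lt_of_le (not_lt.mp hlt))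
    rwa [← v.ne_zero_iff, ← heq, v.ne_zero_iff]
  have hne' : P.coeff j • y ^ j ≠ 0 := by rwa [← v.ne_zero_iff, ← heq, v.ne_zero_iff]
  obtain ⟨a, ha⟩ := hK _ (smul_ne_zero_iff.mp hne).1
  obtain ⟨b, hb⟩ := hK _ (smul_ne_zero_iff.mp hne').1
  refine ⟨j - i, Nat.sub_pos_of_lt hlt, (Nat.sub_le _ _).trans (Finset.mem_range_succ_iff.mp hj),
    a - b, ?_⟩
  rw [Algebra.smul_def, Algebra.smul_def, map_mul, map_mul, map_pow, map_pow, ha, hb] at heq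
  have hvy : v y ≠ 0 := v.ne_zero_iff.mpr hy
  have hvg : v g ≠ 0 := v.ne_zero_iff.mpr hg
  rw [pow_sub₀ _ hvy hlt.le, zpow_sub₀ hvg]
  field_simp
  rw [mul_comm, ← heq, mul_comm]

lemma exists_valuation_pow_eq_zpow_of_finite [FiniteDimensional K F] (hg : g ≠ 0)
    (hK : ∀ a : K, a ≠ 0 → ∃ l : ℤ, v (algebraMap K F a) = v g ^ l) :
    ∃ N : ℕ, 0 < N ∧ ∀ y : F, y ≠ 0 → ∃ l : ℤ, v y ^ N = v g ^ l := by
  refine ⟨(Module.finrank K F).factorial, Nat.factorial_pos _, fun y hy => ?_⟩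
  have hint : IsIntegral K y := .of_finite K y
  obtain ⟨q, hq, hqd, l, hl⟩ :=
    exists_valuation_pow_eq_zpow hK hy hg (minpoly.ne_zero hint) (minpoly.aeval K y)
  obtain ⟨m, hm⟩ := Nat.dvd_factorial hq (hqd.trans (minpoly.natDegree_le y))
  exact ⟨l * m, by rw [hm, pow_mul, hl, zpow_mul, zpow_natCast]⟩

lemma exists_uniformizer {c : F} (hc0 : c ≠ 0) (hc : v c < 1) {N : ℕ} (hN : 0 < N)
    (h : ∀ y : F, y ≠ 0 → ∃ l : ℤ, v y ^ N = v c ^ l) :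
    ∃ π : F, π ≠ 0 ∧ v π < 1 ∧ ∀ y : F, y ≠ 0 → ∃ n : ℤ, v y = v π ^ n := by
  have hvc : 0 < v c := zero_lt_iff.mpr (v.ne_zero_iff.mpr hc0)
  classical
  have hex : ∃ l : ℕ, 0 < l ∧ ∃ y : F, v y ^ N = v c ^ l := ⟨N, hN, c, rfl⟩
  obtain ⟨hl, π, hπ⟩ := Nat.find_spec hex
  set l := Nat.find hex
  have hπ0 : π ≠ 0 := by
    rintro rfl
    rw [map_zero, zero_pow hN.ne'] at hπ
    exact (pow_pos hvc l).ne hπ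
  refine ⟨π, hπ0, ?_, fun y hy => ?_⟩
  · rw [← pow_lt_one_iff hN.ne', hπ]
    exact pow_lt_one₀ zero_le hc hl.ne'
  · obtain ⟨k, hk⟩ := h y hy
    have hl0 : (0 : ℤ) < l := Int.natCast_pos.mpr hl
    have hmod : 0 ≤ k % l := Int.emod_nonneg k hl0.ne'
    refine ⟨k / l, ?_⟩
    have hrem : v (y / π ^ (k / l : ℤ)) ^ N = v c ^ (k % l).toNat := by
      rw [map_div₀, map_zpow₀, div_pow, hk, ← zpow_natCast, ← zpow_mul, mul_comm, zpow_mul,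
        zpow_natCast, hπ, ← zpow_natCast, ← zpow_natCast, ← zpow_mul, ← zpow_sub₀ hvc.ne',
        Int.toNat_of_nonneg hmod, Int.emod_def]
    have hzero : (k % l).toNat = 0 := by
      by_contra hne
      exact Nat.find_min hex ((Int.toNat_lt hmod).mpr (Int.emod_lt_of_pos k hl0))
        ⟨Nat.pos_of_ne_zero hne, _, hrem⟩
    rw [hzero, pow_zero, pow_eq_one_iff_of_nonneg zero_le hN.ne', map_div₀, map_zpow₀] at hrem
    exact eq_of_div_eq_one hrem

lemma valuation_le_uniformizer_of_lt_one {π : F} (hπ0 : π ≠ 0) (hπ : v π < 1)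
    (hgen : ∀ y, y ≠ 0 → ∃ n : ℤ, v y = v π ^ n) {y : F} (hy : v y < 1) : v y ≤ v π := by
  have hvπ : 0 < v π := zero_lt_iff.mpr (v.ne_zero_iff.mpr hπ0)
  obtain rfl | hy0 := eq_or_ne y 0
  · simp
  obtain ⟨n, hn⟩ := hgen y hy0
  rw [hn, zpow_lt_one_iff_right_of_lt_one₀ hvπ hπ] at hy
  simpa [hn] using zpow_le_zpow_right_of_le_one₀ hvπ hπ.le (Int.add_one_le_iff.mpr hy)

lemma valuation_eval_sub_eval_le {P : F[X]} (hP : ∀ i, v (P.coeff i) ≤ 1) {z w : F}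
    (hz : v z ≤ 1) (hw : v w ≤ 1) : v (P.eval z - P.eval w) ≤ v (z - w) := by
  rw [eval_eq_sum_range, eval_eq_sum_range, ← Finset.sum_sub_distrib]
  refine v.map_sum_le fun i _ => ?_
  obtain ⟨q, hq⟩ := sub_dvd_pow_sub_pow (⟨z, hz⟩ : v.integer) ⟨w, hw⟩ i
  have hpow : z ^ i - w ^ i = (z - w) * q := congr_arg Subtype.val hq
  rw [← mul_sub, hpow, map_mul, map_mul]
  exact mul_le_of_le_one_of_le (hP i) (mul_le_of_le_one_right' q.2)

lemma exists_aeval_eq_zero_derivative_ne_zero {A : Type*} [CommRing A] [IsDomain A] [CharZero A]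
    [Algebra A F] [FaithfulSMul A F] {z : F} (hz : IsAlgebraic A z) :
    ∃ P : A[X], aeval z P = 0 ∧ aeval z (derivative P) ≠ 0 := by
  obtain ⟨P, ⟨hP0, hPz⟩, hmin⟩ :=
    (measure (natDegree : A[X] → ℕ)).wf.has_min {P | P ≠ 0 ∧ aeval z P = 0} hz
  have hdeg : P.natDegree ≠ 0 := fun h0 => by
    rw [eq_C_of_natDegree_eq_zero h0, aeval_C, FaithfulSMul.algebraMap_eq_zero_iff] at hPz
    exact hP0 (by rw [eq_C_of_natDegree_eq_zero h0, hPz, map_zero])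
  refine ⟨P, hPz, fun h => hmin _ ⟨fun h0 => ?_, h⟩ (natDegree_derivative_lt hdeg)⟩
  exact hdeg (derivative_eq_zero.mp h0)

variable {R : Type*} [CommRing R] [Algebra R F]

lemma valuation_derivation_sub_le (D : Derivation R F F) {P : F[X]}
    (hP : ∀ i, v (P.coeff i) ≤ 1) (hDP : ∀ i, v (D (P.coeff i)) ≤ 1) {z S : F} (hzS : v (z - S) ≤ 1)
    (hS : v S ≤ 1) (hDS : v (D S) ≤ 1) (hz : P.eval z = 0)
    (hDPS : v (D (P.eval S)) ≤ v (P.eval S)) :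
    v ((derivative P).eval z) * v (D z - D S) ≤ v (z - S) := by
  have hz1 : v z ≤ 1 := by simpa using v.map_add_le hzS hS
  let _ : Differential F := ⟨D.restrictScalars ℤ⟩
  have hD : ∀ y, D (P.eval y) = (Differential.mapCoeffs P).eval y + (derivative P).eval y * D y :=
    fun y => Differential.deriv_aeval_eq y P
  have hP' : ∀ i, v ((derivative P).coeff i) ≤ 1 := fun i => by
    have hnat : v ((i : F) + 1) ≤ 1 := by exact_mod_cast natCast_mem v.integer (i + 1)
    rw [coeff_derivative, map_mul]
    exact mul_le_one' (hP _) hnat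
  have hsplit : (derivative P).eval z * (D z - D S) =
      ((Differential.mapCoeffs P).eval S - (Differential.mapCoeffs P).eval z) +
      ((derivative P).eval S - (derivative P).eval z) * D S - D (P.eval S) := by
    have hDz := hD z
    rw [hz, map_zero] at hDz
    linear_combination hD S - hDz
  rw [← map_mul, hsplit]
  refine v.map_sub_le (v.map_add_le ?_ ?_) ?_
  · rw [v.map_sub_swap z S]
    exact valuation_eval_sub_eval_le hDP hS hz1
  · rw [v.map_sub_swap z S, map_mul]
    exact mul_le_of_le_of_le_one (valuation_eval_sub_eval_le hP' hS hz1) hDS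
  · refine hDPS.trans ?_
    have := valuation_eval_sub_eval_le hP hS hz1
    rwa [hz, sub_zero, v.map_sub_swap] at this

end

section
open Algebra Polynomial

variable {R F Γ₀ : Type*} [Field R] [Field F] [Algebra R F] [LinearOrderedCommGroupWithZero Γ₀]
  {v : Valuation F Γ₀} {π : F}

lemma IsCoefficientField.exists_valuation_sub_le_mul_uniformizer (hR : IsCoefficientField R v)
    (hπ0 : π ≠ 0) (hπ : v π < 1) (hgen : ∀ y, y ≠ 0 → ∃ n : ℤ, v y = v π ^ n) {z a : F}
    (hz : v z ≤ 1) (ha : a ≠ 0) :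
    ∃ S ∈ adjoin R {π}, v (z - S) ≤ v π ∧ v (z - S) ≤ v a * v π := by
  have hvπ : 0 < v π := zero_lt_iff.mpr (v.ne_zero_iff.mpr hπ0)
  obtain ⟨M, hM⟩ := hgen a ha
  obtain ⟨S, hS, hzS⟩ := hR.exists_valuation_sub_le_pow hπ0
    (fun y => valuation_le_uniformizer_of_lt_one hπ0 hπ hgen) hz (M.toNat + 1)
  refine ⟨S, hS, hzS.trans (pow_le_of_le_one zero_le hπ.le M.toNat.succ_ne_zero), ?_⟩
  rw [hM, ← zpow_add_one₀ hvπ.ne']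
  refine hzS.trans ?_
  rw [← zpow_natCast]
  exact zpow_le_zpow_right_of_le_one₀ hvπ hπ.le (by omega)

lemma IsCoefficientField.valuation_derivation_le_uniformizer [CharZero R]
    (hR : IsCoefficientField R v) (hπ0 : π ≠ 0) (hπ : v π < 1)
    (hgen : ∀ y, y ≠ 0 → ∃ n : ℤ, v y = v π ^ n) {D : Derivation R F F} (hD : D π = π) {z : F}
    (hzalg : IsAlgebraic (adjoin R {π}) z) (hz : v z ≤ 1) : v (D z) ≤ v π := by
  have hA : ∀ a : adjoin R {π}, v (a : F) ≤ 1 := fun ⟨a, ha⟩ => by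
    obtain ⟨P, rfl⟩ := adjoin_mem_exists_aeval R π ha
    exact hR.valuation_aeval_le_one hπ.le P
  have hDA : ∀ a : adjoin R {π}, v (D a) ≤ v (a : F) :=
    fun a => hR.valuation_derivation_le_self hπ hD a.2
  have : CharZero (adjoin R {π}) := charZero_of_injective_algebraMap (algebraMap R _).injective
  obtain ⟨P, hPz, hP'z⟩ := exists_aeval_eq_zero_derivative_ne_zero hzalg
  obtain ⟨S, hS, hzSπ, hzS⟩ :=
    hR.exists_valuation_sub_le_mul_uniformizer hπ0 hπ hgen hz hP'z
  have hDPS : v (D (aeval S P)) ≤ v (aeval S P) := by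
    have hmem : aeval S P = (aeval (⟨S, hS⟩ : adjoin R {π}) P : adjoin R {π}) :=
      aeval_algebraMap_apply F (⟨S, hS⟩ : adjoin R {π}) P
    exact hmem ▸ hDA _
  have hdiff : v (aeval z (derivative P)) * v (D z - D S) ≤ v (z - S) := by
    have h := valuation_derivation_sub_le D (P := P.map (algebraMap (adjoin R {π}) F))
      (fun i => coeff_map (algebraMap (adjoin R {π}) F) i ▸ hA _)
      (fun i => coeff_map (algebraMap (adjoin R {π}) F) i ▸ (hDA _).trans (hA _))
      (hzSπ.trans hπ.le) (hA ⟨S, hS⟩) ((hDA ⟨S, hS⟩).trans (hA ⟨S, hS⟩))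
      (by rwa [eval_map_algebraMap]) (by rwa [eval_map_algebraMap])
    rwa [derivative_map, eval_map_algebraMap] at h
  have hle : v (D z - D S) ≤ v π :=
    le_of_mul_le_mul_left (hdiff.trans hzS) (zero_lt_iff.mpr (v.ne_zero_iff.mpr hP'z))
  simpa using v.map_add_le hle (hR.valuation_derivation_le hπ hD hS)

end

section
open Algebra

lemma isAlgebraic_adjoin_singleton_of_trdeg_le_one {R E : Type*} [Field R] [Field E] [Algebra R E]
    (hE : trdeg R E ≤ 1) {t : E} (ht : Transcendental R t) :
    Algebra.IsAlgebraic (adjoin R {t}) E := by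
  have hind : AlgebraicIndependent R (fun _ : PUnit => t) :=
    algebraicIndependent_unique_type_iff.mpr ht
  have := (hind.isTranscendenceBasis_of_trdeg_le_of_finite (by simpa using hE)).isAlgebraic
  rwa [Set.range_const] at this

lemma formallyEtale_of_isAlgebraic (A E : Type*) [CommRing A] [IsDomain A] [CharZero A] [Field E]
    [Algebra A E] [FaithfulSMul A E] [Algebra.IsAlgebraic A E] : FormallyEtale A E := by
  let _ : Algebra (FractionRing A) E := FractionRing.liftAlgebra A E
  have : IsScalarTower A (FractionRing A) E := FractionRing.isScalarTower_liftAlgebra A E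
  have : Algebra.IsAlgebraic (FractionRing A) E :=
    (IsFractionRing.comap_isAlgebraic_iff (A := A) (K := FractionRing A) (C := E)).mp ‹_›
  have : CharZero (FractionRing A) :=
    charZero_of_injective_algebraMap (IsFractionRing.injective A (FractionRing A))
  have : FormallyEtale A (FractionRing A) := .of_isLocalization (nonZeroDivisors A)
  have : FormallyEtale (FractionRing A) E := .of_isSeparable _ E
  exact .comp A (FractionRing A) E

lemma exists_derivation_extending {R S T M : Type*} [CommRing R] [CommRing S] [CommRing T]
    [Algebra R S] [Algebra R T] [Algebra S T] [IsScalarTower R S T] [FormallyEtale S T]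
    [AddCommGroup M] [Module R M] [Module S M] [Module T M] [IsScalarTower R S M]
    [IsScalarTower S T M] [IsScalarTower R T M] (d : Derivation R S M) :
    ∃ D : Derivation R T M, ∀ s, D (algebraMap S T s) = d s := by
  refine ⟨((KaehlerDifferential.isBaseChange_of_formallyEtale R S T).lift
    d.liftKaehlerDifferential).compDer (KaehlerDifferential.D R T), fun s => ?_⟩
  have := (KaehlerDifferential.isBaseChange_of_formallyEtale R S T).lift_eq
    d.liftKaehlerDifferential (KaehlerDifferential.D R S s)
  simpa using this

variable {R F : Type*} [Field R] [CharZero R] [Field F] [Algebra R F]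

lemma exists_derivation_apply_eq_of_isTranscendenceBasis {ι : Type*} {b : ι → F}
    (hb : IsTranscendenceBasis R b) (y : ι → F) : ∃ D : Derivation R F F, ∀ i, D (b i) = y i := by
  let _ : Algebra (MvPolynomial ι R) F := (MvPolynomial.aeval b).toAlgebra
  have : IsScalarTower R (MvPolynomial ι R) F :=
    .of_algebraMap_eq' (MvPolynomial.aeval b).comp_algebraMap.symm
  have : FaithfulSMul (MvPolynomial ι R) F :=
    (faithfulSMul_iff_algebraMap_injective _ F).mpr hb.1
  have := hb.isAlgebraic
  have : Algebra.IsAlgebraic (MvPolynomial ι R) F := .of_ringHom_of_comp_eq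
    hb.1.aevalEquiv (RingHom.id F) (AlgEquiv.surjective _) Function.injective_id
    (by ext <;> simp [RingHom.algebraMap_toAlgebra])
  have := formallyEtale_of_isAlgebraic (MvPolynomial ι R) F
  obtain ⟨D, hD⟩ := exists_derivation_extending (T := F) (MvPolynomial.mkDerivation R y)
  exact ⟨D, fun i => by simpa [RingHom.algebraMap_toAlgebra] using hD (MvPolynomial.X i)⟩

lemma exists_derivation_apply_eq {t : F} (ht : Transcendental R t) (y : F) :
    ∃ D : Derivation R F F, D t = y := by
  have hind : AlgebraicIndepOn R id {t} := algebraicIndependent_unique_type_iff.mpr ht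
  obtain ⟨s, hts, hs⟩ := exists_isTranscendenceBasis_superset hind
  obtain ⟨D, hD⟩ := exists_derivation_apply_eq_of_isTranscendenceBasis hs (fun _ => y)
  exact ⟨D, hD ⟨t, hts rfl⟩⟩

end

section
open Algebra

variable {R F ι : Type*} [Field R] [Field F] [Algebra R F]

open scoped IntermediateField.algebraAdjoinAdjoin in
lemma trdeg_adjoin_range_le [Fintype ι] (x : ι → F) :
    trdeg R (IntermediateField.adjoin R (Set.range x)) ≤ Fintype.card ι := by
  have hX : trdeg R (adjoin R (Set.range x)) ≤ Fintype.card ι := by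
    have := lift_trdeg_le_of_surjective
      (MvPolynomial.aeval x : MvPolynomial ι R →ₐ[R] F).rangeRestrict
      (AlgHom.rangeRestrict_surjective _)
    rw [← adjoin_range_eq_range_aeval, MvPolynomial.trdeg_of_isDomain] at this
    simpa using this
  rwa [← trdeg_add_eq R (adjoin R (Set.range x)), trdeg_eq_zero (R := adjoin R (Set.range x)),
    add_zero]

open IntermediateField in
lemma trdeg_le_one_of_isAlgebraic_adjoin_singleton {E : Type*} (c : F) [Field E] [Algebra R E]
    [Algebra R⟮c⟯ E] [IsScalarTower R R⟮c⟯ E] [Algebra.IsAlgebraic R⟮c⟯ E] : trdeg R E ≤ 1 := by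
  have hc : trdeg R R⟮c⟯ ≤ 1 := by
    have := trdeg_adjoin_range_le (R := R) (fun _ : Unit => c)
    rwa [Set.range_const, Fintype.card_unit, Nat.cast_one] at this
  have hadd := lift_trdeg_add_eq R R⟮c⟯ E
  rw [trdeg_eq_zero (A := E), Cardinal.lift_zero, add_zero] at hadd
  rwa [← Cardinal.lift_le_one_iff, ← hadd, Cardinal.lift_le_one_iff]

lemma isAlgebraic_of_algebraicIndependent_of_mem_adjoin [Finite ι] {A : Type*} [CommRing A]
    [Algebra R A] [Algebra A F] [IsScalarTower R A F] {y : ι → A} {z : ι → F}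
    (hy : AlgebraicIndependent R (algebraMap A F ∘ y))
    (hyz : ∀ i, algebraMap A F (y i) ∈ IntermediateField.adjoin R (Set.range z)) (i : ι) :
    IsAlgebraic A (z i) := by
  cases nonempty_fintype ι
  let E := IntermediateField.adjoin R (Set.range z)
  let y' : ι → E := fun i => ⟨algebraMap A F (y i), hyz i⟩
  have hy' : AlgebraicIndependent R y' := .of_comp E.val hy
  have halg : IsAlgebraic (adjoin R (Set.range y'))
      (⟨z i, IntermediateField.subset_adjoin _ _ ⟨i, rfl⟩⟩ : E) :=
    (hy'.isTranscendenceBasis_of_lift_trdeg_le_of_finite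
      (by simpa using trdeg_adjoin_range_le z)).isAlgebraic.isAlgebraic _
  let φ : adjoin R (Set.range y') →ₐ[R] A := (MvPolynomial.aeval y).comp hy'.aevalEquiv.symm
  have hφ : ∀ s, algebraMap A F (φ s) = E.val s := fun s => by
    obtain ⟨p, rfl⟩ := hy'.aevalEquiv.surjective s
    calc algebraMap A F (φ (hy'.aevalEquiv p)) = algebraMap A F (MvPolynomial.aeval y p) :=
          congr_arg (fun q => algebraMap A F (MvPolynomial.aeval y q))
            (hy'.aevalEquiv.symm_apply_apply p)
      _ = MvPolynomial.aeval (algebraMap A F ∘ y) p :=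
          (MvPolynomial.aeval_algebraMap_apply F y p).symm
      _ = E.val (MvPolynomial.aeval y' p) := (MvPolynomial.comp_aeval_apply y' E.val p).symm
      _ = E.val (hy'.aevalEquiv p) := congr_arg E.val (hy'.algebraMap_aevalEquiv p).symm
  refine halg.ringHom_of_comp_eq φ.toRingHom E.val.toRingHom (fun s t hst => ?_) (RingHom.ext hφ)
  exact Subtype.ext (E.val.injective ((hφ s).symm.trans ((congr_arg _ hst).trans (hφ t))))

end

section
open Algebra

variable {R F Γ₀ : Type*} [Field R] [Field F] [Algebra R F] [LinearOrderedCommGroupWithZero Γ₀]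
  {v : Valuation F Γ₀} {c : F}

lemma IsCoefficientField.exists_derivation_valuation_pow_le [CharZero R]
    (hR : IsCoefficientField R v) (hF : trdeg R F ≤ 1) (hc0 : c ≠ 0) (hc : v c < 1) {N : ℕ}
    (hN : 0 < N) (h : ∀ y, y ≠ 0 → ∃ l : ℤ, v y ^ N = v c ^ l) :
    ∃ D : Derivation R F F, v (D c) = v c ∧ ∃ e : ℕ, ∀ z, v z ≤ 1 → v (D z) ^ e ≤ v c := by
  obtain ⟨π, hπ0, hπ, hgen⟩ := exists_uniformizer hc0 hc hN h
  have hvπ : 0 < v π := zero_lt_iff.mpr (v.ne_zero_iff.mpr hπ0)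
  have := isAlgebraic_adjoin_singleton_of_trdeg_le_one hF (hR.transcendental hπ0 hπ)
  obtain ⟨D, hD⟩ := exists_derivation_apply_eq (hR.transcendental hπ0 hπ) π
  have hDle : ∀ z, v z ≤ 1 → v (D z) ≤ v π := fun z =>
    hR.valuation_derivation_le_uniformizer hπ0 hπ hgen hD (Algebra.IsAlgebraic.isAlgebraic z)
  obtain ⟨n, hn⟩ := hgen c hc0
  have hn0 : 0 < n := by
    rwa [hn, zpow_lt_one_iff_right_of_lt_one₀ hvπ hπ] at hc
  lift n to ℕ using hn0.le
  rw [Nat.cast_pos] at hn0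
  rw [zpow_natCast] at hn
  refine ⟨D, ?_, n, fun z hz => hn ▸ pow_le_pow_left₀ zero_le (hDle z hz) n⟩
  have hu : v (c / π ^ n) = 1 := by
    rw [map_div₀, map_pow, hn, div_self (pow_pos hvπ n).ne']
  have hnat : v (n * (c / π ^ n)) = 1 := by
    rw [map_mul, hu, mul_one, ← map_natCast (algebraMap R F) n,
      hR.valuation_algebraMap n (Nat.cast_ne_zero.mpr hn0.ne')]
  have hDc : D c = (D (c / π ^ n) + n * (c / π ^ n)) * π ^ n := by
    conv_lhs => rw [← div_mul_cancel₀ c (pow_ne_zero n hπ0)]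
    rw [D.leibniz, D.leibniz_pow, hD]
    simp only [smul_eq_mul, nsmul_eq_mul, ← pow_succ, Nat.sub_add_cancel hn0]
    ring
  have hlt : v (D (c / π ^ n)) < v (n * (c / π ^ n)) := hnat ▸ (hDle _ hu.le).trans_lt hπ
  rw [hDc, map_mul, map_pow, v.map_add_eq_of_lt_right hlt, hnat, one_mul, hn]

lemma derivation_mvPolynomial_aeval {R A M ι : Type*} [CommSemiring R] [CommSemiring A]
    [Algebra R A] [AddCommMonoid M] [Module A M] [Module R M] [Fintype ι]
    (D : Derivation R A M) (x : ι → A) (P : MvPolynomial ι R) :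
    D (MvPolynomial.aeval x P) = ∑ i, MvPolynomial.aeval x (MvPolynomial.pderiv i P) • D (x i) := by
  classical
  induction P using MvPolynomial.induction_on with
  | C a => simp
  | add P Q hP hQ => simp only [map_add, hP, hQ, add_smul, Finset.sum_add_distrib]
  | mul_X P j hP =>
    simp [Derivation.leibniz, hP, add_smul, mul_smul, Finset.sum_add_distrib, Finset.smul_sum,
      MvPolynomial.pderiv_X, Pi.single_apply, apply_ite]

lemma IsCoefficientField.exists_pow_lt_valuation_pderiv_pow [CharZero R]
    (hR : IsCoefficientField R v) (hF : trdeg R F ≤ 1) {N : ℕ} (hN : 0 < N) {ι : Type*} [Finite ι]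
    {x : ι → F} (hx : ∀ i, v (x i) ≤ 1) {P : MvPolynomial ι R} (hPc : MvPolynomial.aeval x P = c)
    (hc0 : c ≠ 0) (hc : v c < 1) (h : ∀ y, y ≠ 0 → ∃ l : ℤ, v y ^ N = v c ^ l) :
    ∃ e : ℕ, ∃ i, v c ^ e < v (MvPolynomial.aeval x (MvPolynomial.pderiv i P)) ^ (e + 1) := by
  cases nonempty_fintype ι
  obtain ⟨D, hDc, e, he⟩ := hR.exists_derivation_valuation_pow_le hF hc0 hc hN h
  refine ⟨e, ?_⟩
  by_contra! hle
  refine (v.map_sum_lt (v.ne_zero_iff.mpr hc0) fun i _ => ?_).ne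
    ((congr_arg v (derivation_mvPolynomial_aeval D x P)).symm.trans (hPc ▸ hDc))
  have hvc : 0 < v c := zero_lt_iff.mpr (v.ne_zero_iff.mpr hc0)
  rw [smul_eq_mul, map_mul]
  refine lt_of_pow_lt_pow_left₀ (e * (e + 1)) zero_le ?_
  set p := v (MvPolynomial.aeval x (MvPolynomial.pderiv i P))
  calc (p * v (D (x i))) ^ (e * (e + 1)) = (p ^ (e + 1)) ^ e * (v (D (x i)) ^ e) ^ (e + 1) := by
        rw [mul_pow, pow_mul' p, pow_mul (v (D (x i)))]
    _ ≤ (v c ^ e) ^ e * v c ^ (e + 1) :=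
        mul_le_mul' (pow_le_pow_left₀ zero_le (hle i) e) (pow_le_pow_left₀ zero_le (he _ (hx i)) _)
    _ = v c ^ (e * (e + 1) + 1) := by rw [← pow_mul, ← pow_add]; ring_nf
    _ < v c ^ (e * (e + 1)) := pow_lt_pow_right_of_lt_one₀ hvc hc (Nat.lt_succ_self _)

open IntermediateField in
lemma IsCoefficientField.exists_pow_lt_valuation_pderiv_pow_of_isAlgebraic [CharZero R]
    (hR : IsCoefficientField R v) {ι : Type*} [Finite ι] {x : ι → F} (hx : ∀ i, v (x i) ≤ 1)
    {P : MvPolynomial ι R} (hPc : MvPolynomial.aeval x P = c) (hc0 : c ≠ 0) (hc : v c < 1)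
    (hxalg : ∀ i, IsAlgebraic R⟮c⟯ (x i)) :
    ∃ e : ℕ, ∃ i, v c ^ e < v (MvPolynomial.aeval x (MvPolynomial.pderiv i P)) ^ (e + 1) := by
  let E := IntermediateField.adjoin R⟮c⟯ (Set.range x)
  have : FiniteDimensional R⟮c⟯ E := finiteDimensional_adjoin <| by
    rintro _ ⟨i, rfl⟩
    exact (hxalg i).isIntegral
  have : IsScalarTower R E F := .of_algebraMap_eq fun _ => rfl
  let x' : ι → E := fun i => ⟨x i, subset_adjoin _ _ ⟨i, rfl⟩⟩
  have hx' : ∀ Q : MvPolynomial ι R,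
      algebraMap E F (MvPolynomial.aeval x' Q) = MvPolynomial.aeval x Q := fun Q =>
    (MvPolynomial.aeval_algebraMap_apply F x' Q).symm
  have hc' : MvPolynomial.aeval x' P = algebraMap R⟮c⟯ E (AdjoinSimple.gen R c) :=
    Subtype.ext ((hx' P).trans hPc)
  have hR' : IsCoefficientField R (v.comap (algebraMap E F)) := hR.comap
  have hK : ∀ a : R⟮c⟯, a ≠ 0 → ∃ l : ℤ, v.comap (algebraMap E F) (algebraMap R⟮c⟯ E a) =
      v.comap (algebraMap E F) (algebraMap R⟮c⟯ E (AdjoinSimple.gen R c)) ^ l :=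
    fun a ha => hR.exists_valuation_eq_zpow_of_mem_adjoin hc0 hc a.2 (Subtype.coe_ne_coe.mpr ha)
  have hc0' : algebraMap R⟮c⟯ E (AdjoinSimple.gen R c) ≠ 0 := fun h =>
    hc0 (congr_arg (algebraMap E F) h)
  obtain ⟨N, hN, h⟩ := exists_valuation_pow_eq_zpow_of_finite hc0' hK
  obtain ⟨e, i, hei⟩ := hR'.exists_pow_lt_valuation_pderiv_pow
    (trdeg_le_one_of_isAlgebraic_adjoin_singleton c) hN hx hc' hc0' hc h
  rw [Valuation.comap_apply (algebraMap E F) v (MvPolynomial.aeval x' _), hx'] at hei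
  exact ⟨e, i, hei⟩

open IntermediateField in
lemma IsCoefficientField.valuation_le_one_of_forall_pow_mul_le (hR : IsCoefficientField R v)
    (hc0 : c ≠ 0) (hc : v c < 1) {y : F} (hy : IsAlgebraic R⟮c⟯ y)
    (h : ∀ N : ℕ, v y ^ (N + 1) * v c ≤ 1) : v y ≤ 1 := by
  by_contra! hlt
  have hy0 : y ≠ 0 := by rintro rfl; simp at hlt
  have hvc : 0 < v c := zero_lt_iff.mpr (v.ne_zero_iff.mpr hc0)
  obtain ⟨P, hP, hPy⟩ := hy
  obtain ⟨q, hq, -, l, hl⟩ := exists_valuation_pow_eq_zpow (K := R⟮c⟯) (v := v)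
    (fun a ha => hR.exists_valuation_eq_zpow_of_mem_adjoin hc0 hc a.2 (Subtype.coe_ne_coe.mpr ha))
    hy0 hc0 hP hPy
  have hl0 : l < 0 := by
    rw [← one_lt_zpow_iff_right_of_lt_one₀ hvc hc, ← hl]
    exact one_lt_pow₀ hlt hq.ne'
  have hl1 := h (q * 2 - 1)
  rw [Nat.sub_add_cancel (by omega), pow_mul, hl, ← zpow_natCast, ← zpow_mul,
    ← zpow_add_one₀ hvc.ne', zpow_le_one_iff_right_of_lt_one₀ hvc hc] at hl1
  omega

end

section
open MvPolynomial

variable {R F σ : Type*} [Field R] [Field F] [Algebra R F]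

lemma mvPolynomial_aeval_mem_intermediateField (E : IntermediateField R F) {x : σ → F}
    (hx : ∀ i, x i ∈ E) (Q : MvPolynomial σ R) : aeval x Q ∈ E :=
  comp_aeval_apply (fun i => (⟨x i, hx i⟩ : E)) E.val Q ▸ SetLike.coe_mem _

variable [Finite σ] {x : σ → F}

lemma exists_aeval_pderiv_ne_zero [CharZero R] {P : MvPolynomial σ R}
    (hP : Transcendental R (aeval x P)) : ∃ i, aeval x (pderiv i P) ≠ 0 := by
  cases nonempty_fintype σ
  obtain ⟨D, hD⟩ := exists_derivation_apply_eq hP 1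
  by_contra! h
  simp [derivation_mvPolynomial_aeval, h] at hD

open IntermediateField in
lemma isAlgebraic_of_minors_eq_zero {k : Type*} [Field k] [CharZero k] [Algebra k R] [Algebra k F]
    [IsScalarTower k R F] {P S : MvPolynomial σ k} {a : σ → R} (ha : AlgebraicIndependent k a)
    {c : F} (hPc : aeval x P = c) (hc : Transcendental R c)
    (hcrit : ∀ i j,
      aeval x (pderiv i P) * (aeval x (pderiv j S) + 2 * c ^ 2 * (x j - algebraMap R F (a j))) =
      aeval x (pderiv j P) * (aeval x (pderiv i S) + 2 * c ^ 2 * (x i - algebraMap R F (a i))))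
    (i : σ) : IsAlgebraic R⟮c⟯ (x i) := by
  have hc0 : c ≠ 0 := fun h => hc (h ▸ isAlgebraic_zero)
  have : CharZero F := charZero_of_injective_algebraMap (algebraMap k F).injective
  have : IsScalarTower k R⟮c⟯ F := .of_algebraMap_eq fun _ => rfl
  obtain ⟨i₀, hi₀⟩ := exists_aeval_pderiv_ne_zero
    (hPc ▸ hc.restrictScalars (algebraMap k R).injective : Transcendental k (aeval x P))
  set l := (aeval x (pderiv i₀ S) + 2 * c ^ 2 * (x i₀ - algebraMap R F (a i₀))) /
    aeval x (pderiv i₀ P) with hl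
  let z : Unit ⊕ σ → F := Sum.elim (fun _ => l) x
  let y : Unit ⊕ σ → R⟮c⟯ := Sum.elim (fun _ => AdjoinSimple.gen R c) (algebraMap R _ ∘ a)
  have hy : AlgebraicIndependent k (algebraMap R⟮c⟯ F ∘ y) := by
    rw [Sum.comp_elim]
    exact ha.sumElim_comp (algebraicIndependent_unique_type_iff.mpr hc)
  have hxz : ∀ j, x j ∈ IntermediateField.adjoin k (Set.range z) :=
    fun j => subset_adjoin _ _ ⟨.inr j, rfl⟩
  have hlz : l ∈ IntermediateField.adjoin k (Set.range z) := subset_adjoin _ _ ⟨.inl (), rfl⟩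
  have haeval := mvPolynomial_aeval_mem_intermediateField _ hxz
  refine isAlgebraic_of_algebraicIndependent_of_mem_adjoin hy (z := z) ?_ (.inr i)
  rintro (_ | j)
  · exact (hPc ▸ haeval P : c ∈ _)
  · have haj : algebraMap R F (a j) =
        x j + (aeval x (pderiv j S) - l * aeval x (pderiv j P)) / (2 * c ^ 2) := by
      rw [hl]
      field_simp
      linear_combination -hcrit i₀ j
    exact haj ▸ add_mem (hxz j) (div_mem (sub_mem (haeval _) (mul_mem hlz (haeval _)))
      (mul_mem (ofNat_mem _ 2) (pow_mem (hPc ▸ haeval P) 2)))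

end

section
open Algebra MvPolynomial Cardinal

universe u

variable {R : Type u} [Field R]

lemma exists_algebraicIndependent_of_countable [Uncountable R] (k : Type u) [Field k] [Countable k]
    [Algebra k R] (ι : Type*) [Countable ι] : ∃ a : ι → R, AlgebraicIndependent k a := by
  obtain ⟨s, hs⟩ := exists_isTranscendenceBasis k R
  have : Infinite s := by
    by_contra! hfin
    have hadjoin : #(adjoin k (Set.range ((↑) : s → R))) ≤ ℵ₀ :=
      (cardinalMk_adjoin_le k _).trans <| max_le (max_le (mk_le_aleph0_iff.mpr ‹_›)
        (Set.countable_range _).le_aleph0) le_rfl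
    have := hs.isAlgebraic
    have hR := Algebra.IsAlgebraic.cardinalMk_le_max (adjoin k (Set.range ((↑) : s → R))) R
    rw [max_eq_right hadjoin] at hR
    exact hR.not_gt (aleph0_lt_mk_iff.mpr ‹_›)
  obtain ⟨f, hf⟩ := exists_injective_nat ι
  exact ⟨_, hs.1.comp _ ((Infinite.natEmbedding s).injective.comp hf)⟩

lemma exists_countable_subfield_subset_range_map {σ : Type*} {s : Set (MvPolynomial σ R)}
    (hs : s.Countable) : ∃ k : Subfield R, Countable k ∧ s ⊆ Set.range (map (algebraMap k R)) := by
  refine ⟨Subfield.closure (⋃ P ∈ s, P.coeffs), ?_, fun P hP =>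
    mem_range_map_iff_coeffs_subset.mpr fun r hr => ?_⟩
  · rw [← mk_le_aleph0_iff]
    exact (Subfield.cardinalMk_closure_le_max _).trans
      (max_le (hs.biUnion fun P _ => Finset.countable_toSet _).le_aleph0 le_rfl)
  · exact ⟨⟨r, Subfield.subset_closure (Set.mem_biUnion hP hr)⟩, rfl⟩

open IntermediateField in
lemma exists_forall_isAlgebraic_of_minors_eq_zero [Uncountable R] [CharZero R] {σ : Type*}
    [Finite σ] (P S : MvPolynomial σ R) : ∃ a : σ → R, ∀ {F : Type*} [Field F] [Algebra R F]
      {x : σ → F} {c : F}, aeval x P = c → Transcendental R c → (∀ i j,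
        aeval x (pderiv i P) * (aeval x (pderiv j S) + 2 * c ^ 2 * (x j - algebraMap R F (a j))) =
        aeval x (pderiv j P) * (aeval x (pderiv i S) + 2 * c ^ 2 * (x i - algebraMap R F (a i)))) →
      ∀ i, IsAlgebraic R⟮c⟯ (x i) := by
  obtain ⟨k, hk, hPS⟩ := exists_countable_subfield_subset_range_map (Set.toFinite {P, S}).countable
  obtain ⟨P, rfl⟩ := hPS (Set.mem_insert _ _)
  obtain ⟨S, rfl⟩ := hPS (Set.mem_insert_of_mem _ rfl)
  obtain ⟨a, ha⟩ := exists_algebraicIndependent_of_countable (R := R) k σ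
  refine ⟨a, fun {F} _ _ x c hPc hc hcrit => ?_⟩
  simp only [pderiv_map, MvPolynomial.aeval_map_algebraMap] at hPc hcrit
  exact isAlgebraic_of_minors_eq_zero ha hPc hc hcrit

end

section
open MvPolynomial

variable {σ : Type*}

lemma hasStrictFDerivAt_mvPolynomial_eval [Fintype σ] {𝕜 : Type*} [NontriviallyNormedField 𝕜]
    (P : MvPolynomial σ 𝕜) (x : σ → 𝕜) :
    HasStrictFDerivAt (fun y => eval y P)
      (∑ i, eval x (pderiv i P) • (ContinuousLinearMap.proj i : (σ → 𝕜) →L[𝕜] 𝕜)) x := by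
  classical
  induction P using MvPolynomial.induction_on with
  | C a => simpa only [eval_C] using (hasStrictFDerivAt_const a x).congr_fderiv (by ext; simp)
  | add P Q hP hQ =>
    simp only [map_add]
    refine (hP.add hQ).congr_fderiv ?_
    ext v
    simp [add_mul, Finset.sum_add_distrib]
  | mul_X P j hP =>
    simp only [map_mul, eval_X]
    refine (hP.mul (hasStrictFDerivAt_apply j x)).congr_fderiv ?_
    ext v
    simp [pderiv_X, Pi.single_apply, add_mul, Finset.sum_add_distrib, Finset.mul_sum, mul_assoc,
      apply_ite]

lemma eval_pderiv_mul_eval_pderiv_comm_of_isLocalExtrOn [Finite σ] {P Q : MvPolynomial σ ℝ}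
    {x : σ → ℝ} (h : IsLocalExtrOn (fun y => eval y Q) {y | eval y P = eval x P} x) (i j : σ) :
    eval x (pderiv i P) * eval x (pderiv j Q) = eval x (pderiv j P) * eval x (pderiv i Q) := by
  classical
  cases nonempty_fintype σ
  obtain ⟨a, b, hab, hsum⟩ := h.exists_multipliers_of_hasStrictFDerivAt_1d
    (hasStrictFDerivAt_mvPolynomial_eval P x) (hasStrictFDerivAt_mvPolynomial_eval Q x)
  have hcoord : ∀ l, a * eval x (pderiv l P) + b * eval x (pderiv l Q) = 0 := fun l => by
    simpa [Pi.single_apply] using congr_arg (fun T => T (Pi.single l 1)) hsum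
  rcases ne_or_eq b 0 with hb | rfl
  · apply mul_left_cancel₀ hb
    linear_combination eval x (pderiv i P) * hcoord j - eval x (pderiv j P) * hcoord i
  · have ha : a ≠ 0 := by simpa using hab
    simp only [zero_mul, add_zero, mul_eq_zero, ha, false_or] at hcoord
    simp only [hcoord, zero_mul]

variable [Fintype σ]

lemma pi_norm_sq_le_sum_sq (x : σ → ℝ) : ‖x‖ ^ 2 ≤ ∑ i, x i ^ 2 := by
  rw [← Real.le_sqrt (norm_nonneg x) (Finset.sum_nonneg fun i _ => sq_nonneg (x i))]
  refine (pi_norm_le_iff_of_nonneg (Real.sqrt_nonneg _)).mpr fun i => Real.abs_le_sqrt ?_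
  exact Finset.single_le_sum (f := fun i => x i ^ 2) (fun i _ => sq_nonneg _) (Finset.mem_univ i)

lemma exists_penalized_minimizer (P S : MvPolynomial σ ℝ) (hS : ∀ x, 0 ≤ eval x S) (a x₀ : σ → ℝ)
    {τ : ℝ} (hτ : 0 < τ) : ∃ x : σ → ℝ, eval x P = eval x₀ P ∧
      eval x S + τ * ∑ i, (x i - a i) ^ 2 ≤ eval x₀ S + τ * ∑ i, (x₀ i - a i) ^ 2 ∧
      ∀ i j, eval x (pderiv i P) * (eval x (pderiv j S) + 2 * τ * (x j - a j)) =
        eval x (pderiv j P) * (eval x (pderiv i S) + 2 * τ * (x i - a i)) := by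
  classical
  set Q : MvPolynomial σ ℝ := S + C τ * ∑ i, (X i - C (a i)) ^ 2
  have hQ : ∀ x, eval x Q = eval x S + τ * ∑ i, (x i - a i) ^ 2 := fun x => by simp [Q]
  have hQ' : ∀ x j, eval x (pderiv j S) + 2 * τ * (x j - a j) = eval x (pderiv j Q) := fun x j => by
    simp [Q, pderiv_X, Pi.single_apply, mul_assoc, mul_left_comm τ, Derivation.leibniz_pow]
  have hnorm : Tendsto (fun x => ‖x - a‖) (cocompact (σ → ℝ)) atTop :=
    tendsto_norm_cocompact_atTop.comp (Homeomorph.subRight a).isClosedEmbedding.tendsto_cocompact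
  have hcoercive : Tendsto (fun x => eval x Q) (cocompact (σ → ℝ)) atTop := by
    refine tendsto_atTop_mono (fun x => ?_)
      (((tendsto_pow_atTop two_ne_zero).comp hnorm).const_mul_atTop hτ)
    rw [hQ]
    exact (mul_le_mul_of_nonneg_left (pi_norm_sq_le_sum_sq (x - a)) hτ.le).trans
      (le_add_of_nonneg_left (hS x))
  obtain ⟨x, hxP, hmin⟩ := (continuous_eval Q).continuousOn.exists_isMinOn'
    (isClosed_eq (continuous_eval P) continuous_const) (x₀ := x₀) rfl
    ((hcoercive.eventually_ge_atTop _).filter_mono inf_le_left)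
  simp only [← hQ, hQ']
  refine ⟨x, hxP, hmin rfl, eval_pderiv_mul_eval_pderiv_comm_of_isLocalExtrOn (.inl ?_)⟩
  rw [show {y | eval y P = eval x P} = {y | eval y P = eval x₀ P} from hxP ▸ rfl]
  exact hmin.localize

end

section
open IntermediateField MvPolynomial

variable {R F Γ₀ : Type*} [Field R] [Field F] [Algebra R F] [LinearOrderedCommGroupWithZero Γ₀]
  {v : Valuation F Γ₀} {c : F}

lemma IsCoefficientField.exists_pow_lt_of_valuation_pderiv_sq_le [CharZero R]
    (hR : IsCoefficientField R v) {σ : Type*} [Finite σ] {x : σ → F} {P : MvPolynomial σ R}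
    (hPc : aeval x P = c) (hc0 : c ≠ 0) (hc : v c < 1) (hx : ∀ i, IsAlgebraic R⟮c⟯ (x i))
    {B : Γ₀} (hgrad : ∀ i, v (aeval x (pderiv i P)) ^ 2 ≤ B) {a : σ → R}
    (hdist : ∀ i, v (c * (x i - algebraMap R F (a i))) ^ 2 ≤ B) :
    ∃ e : ℕ, (v c ^ e) ^ 2 < B ^ (e + 1) := by
  by_contra! hB
  have hvc : 0 < v c := zero_lt_iff.mpr (v.ne_zero_iff.mpr hc0)
  have hx1 : ∀ i, v (x i) ≤ 1 := fun i => by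
    have halg : IsAlgebraic R⟮c⟯ (x i - algebraMap R F (a i)) :=
      (hx i).sub (isAlgebraic_algebraMap (R := R⟮c⟯) (algebraMap R R⟮c⟯ (a i)))
    have hdiff : v (x i - algebraMap R F (a i)) ≤ 1 :=
      hR.valuation_le_one_of_forall_pow_mul_le hc0 hc halg fun N => by
        rw [← pow_le_one_iff two_ne_zero, ← mul_le_mul_iff_of_pos_left (pow_pos (pow_pos hvc N) 2)]
        calc (v c ^ N) ^ 2 * (v (x i - algebraMap R F (a i)) ^ (N + 1) * v c) ^ 2
            = (v (c * (x i - algebraMap R F (a i))) ^ 2) ^ (N + 1) := by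
              rw [← mul_pow, map_mul, pow_right_comm _ 2, mul_pow (v c), pow_succ (v c),
                mul_right_comm, mul_assoc]
          _ ≤ B ^ (N + 1) := pow_le_pow_left₀ zero_le (hdist i) _
          _ ≤ (v c ^ N) ^ 2 * 1 := (hB N).trans_eq (mul_one _).symm
    simpa using v.map_add_le hdiff (hR.valuation_algebraMap_le_one (a i))
  obtain ⟨e, i, he⟩ := hR.exists_pow_lt_valuation_pderiv_pow_of_isAlgebraic hx1 hPc hc0 hc hx
  refine (hB e).not_gt ?_
  calc (v c ^ e) ^ 2 < (v (aeval x (pderiv i P)) ^ (e + 1)) ^ 2 :=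
        pow_lt_pow_left₀ he zero_le two_ne_zero
    _ = (v (aeval x (pderiv i P)) ^ 2) ^ (e + 1) := by rw [← pow_mul, ← pow_mul, mul_comm]
    _ ≤ B ^ (e + 1) := pow_le_pow_left₀ zero_le (hgrad i) _

end

section

variable {F : Type*} [Field F] [LinearOrder F] [IsStrictOrderedRing F]

variable (F) in
/-- The natural valuation of an ordered field, whose valuation ring consists of the finite
elements. It is multiplicative, so that smaller elements have smaller values, whereas
`ArchimedeanClass.addValuation` has the opposite convention. -/
noncomputable def archimedeanValuation : Valuation F (Multiplicative (ArchimedeanClass F)ᵒᵈ) :=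
  (ArchimedeanClass.addValuation F).toValuation

lemma abs_lt_abs_of_archimedeanValuation_lt {a b : F}
    (h : archimedeanValuation F a < archimedeanValuation F b) : |a| < |b| := by
  simpa using ArchimedeanClass.mk_lt_mk.mp h 1

lemma archimedeanValuation_le_of_le {a b : F} (ha : 0 ≤ a) (hab : a ≤ b) :
    archimedeanValuation F a ≤ archimedeanValuation F b :=
  ArchimedeanClass.mk_le_mk_of_abs (abs_le_abs_of_nonneg ha hab)

lemma archimedeanValuation_le_one_iff {a : F} :
    archimedeanValuation F a ≤ 1 ↔ 0 ≤ ArchimedeanClass.mk a := by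
  rw [← map_one (archimedeanValuation F), ← ArchimedeanClass.mk_one]
  exact Iff.rfl

lemma archimedeanValuation_lt_one_iff {a : F} :
    archimedeanValuation F a < 1 ↔ 0 < ArchimedeanClass.mk a := by
  rw [← map_one (archimedeanValuation F), ← ArchimedeanClass.mk_one]
  exact Iff.rfl

lemma isCoefficientField_real_archimedeanValuation [Algebra ℝ F] :
    IsCoefficientField ℝ (archimedeanValuation F) := by
  let g : ℝ →+*o F :=
    ⟨algebraMap ℝ F, ringHom_monotone (fun _ => Real.isSquare_iff.mpr) (algebraMap ℝ F)⟩
  refine ⟨fun r hr => ?_, fun y hy => ⟨ArchimedeanClass.stdPart y, ?_⟩⟩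
  · rw [← map_one (archimedeanValuation F)]
    exact (ArchimedeanClass.mk_map_of_archimedean' g hr).trans (ArchimedeanClass.mk_one).symm
  · exact archimedeanValuation_lt_one_iff.mpr
      (ArchimedeanClass.mk_sub_stdPart_pos g (archimedeanValuation_le_one_iff.mp hy))

end

section
open MvPolynomial

variable {σ : Type*} [Fintype σ]

/-- The square `|∇P|²` of the norm of the gradient of `P`, as a polynomial. -/
noncomputable def gradSq {R : Type*} [CommSemiring R] (P : MvPolynomial σ R) : MvPolynomial σ R :=
  ∑ i, pderiv i P ^ 2

theorem exists_forall_exists_archimedeanValuation_pderiv (P : MvPolynomial σ ℝ) :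
    ∃ a : σ → ℝ, ∀ {F : Type*} [Field F] [LinearOrder F] [IsStrictOrderedRing F] [Algebra ℝ F]
      {x y : σ → F} {c : F}, aeval x P = c → c ≠ 0 → archimedeanValuation F c < 1 →
      (∀ i, archimedeanValuation F (y i) ≤ 1) →
      (∀ i j, aeval x (pderiv i P) *
          (aeval x (pderiv j (gradSq P)) + 2 * c ^ 2 * (x j - algebraMap ℝ F (a j))) =
        aeval x (pderiv j P) *
          (aeval x (pderiv i (gradSq P)) + 2 * c ^ 2 * (x i - algebraMap ℝ F (a i)))) →
      aeval x (gradSq P) + c ^ 2 * ∑ i, (x i - algebraMap ℝ F (a i)) ^ 2 ≤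
        aeval y (gradSq P) + c ^ 2 * ∑ i, (y i - algebraMap ℝ F (a i)) ^ 2 →
      ∃ e : ℕ, ∃ i, archimedeanValuation F c ^ e <
        archimedeanValuation F (aeval y (pderiv i P)) ^ (e + 1) := by
  obtain ⟨a, ha⟩ := exists_forall_isAlgebraic_of_minors_eq_zero P (gradSq P)
  refine ⟨a, fun {F} _ _ _ _ x y c hPc hc0 hc hy hcrit hle => ?_⟩
  set v := archimedeanValuation F
  have hR : IsCoefficientField ℝ v := isCoefficientField_real_archimedeanValuation
  have hx := ha hPc (hR.transcendental hc0 hc) hcrit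
  simp only [gradSq, map_sum, map_pow, Finset.mul_sum, ← Finset.sum_add_distrib, ← mul_pow] at hle
  set E := ∑ i, (aeval y (pderiv i P) ^ 2 + (c * (y i - algebraMap ℝ F (a i))) ^ 2)
  have hterm : ∀ i, aeval x (pderiv i P) ^ 2 + (c * (x i - algebraMap ℝ F (a i))) ^ 2 ≤ E :=
    fun i => (Finset.single_le_sum (fun j _ => by positivity) (Finset.mem_univ i)).trans hle
  obtain ⟨e, he⟩ := hR.exists_pow_lt_of_valuation_pderiv_sq_le hPc hc0 hc hx (B := v E) (a := a)
    (fun i => map_pow v _ 2 ▸ archimedeanValuation_le_of_le (sq_nonneg _)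
      (le_of_add_le_of_nonneg_left (hterm i) (sq_nonneg _)))
    (fun i => map_pow v _ 2 ▸ archimedeanValuation_le_of_le (sq_nonneg _)
      (le_of_add_le_of_nonneg_right (hterm i) (sq_nonneg _)))
  refine ⟨e, ?_⟩
  by_contra! hgrad
  have hsmall : ∀ z, v z ^ (e + 1) ≤ v c ^ e → v (z ^ 2) < v E := fun z hz => by
    refine lt_of_pow_lt_pow_left₀ (e + 1) zero_le (lt_of_le_of_lt ?_ he)
    rw [map_pow, ← pow_mul, mul_comm, pow_mul]
    exact pow_le_pow_left₀ zero_le hz 2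
  have hE : v E ≠ 0 := fun h => by simp [h] at he
  refine (v.map_sum_lt hE fun i _ => v.map_add_lt (hsmall _ (hgrad i)) (hsmall _ ?_)).false
  have hya : v (y i - algebraMap ℝ F (a i)) ≤ 1 :=
    v.map_sub_le (hy i) (hR.valuation_algebraMap_le_one (a i))
  rw [map_mul]
  calc (v c * v (y i - algebraMap ℝ F (a i))) ^ (e + 1)
      ≤ v c ^ (e + 1) := pow_le_pow_left₀ zero_le (mul_le_of_le_one_right' hya) _
    _ ≤ v c ^ e := pow_le_pow_right_of_le_one' hc.le (Nat.le_succ e)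

end

section
open MvPolynomial Hyperreal

variable {σ : Type*}

noncomputable instance : Algebra ℝ ℝ* := coeRingHom.toRingHom.toAlgebra

/-- `Hyperreal.ofSeq`, the class of a sequence of reals in the ultrapower, as an algebra
homomorphism. -/
noncomputable def hyperrealOfSeq : (ℕ → ℝ) →ₐ[ℝ] ℝ* :=
  { Germ.coeRingHom (hyperfilter ℕ : Filter ℕ) with
    toFun := ofSeq
    commutes' := fun _ => rfl }

lemma aeval_hyperrealOfSeq (x : ℕ → σ → ℝ) (Q : MvPolynomial σ ℝ) :
    aeval (fun i => hyperrealOfSeq fun m => x m i) Q = hyperrealOfSeq fun m => eval (x m) Q := by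
  rw [← comp_aeval_apply]
  refine congr_arg hyperrealOfSeq (funext fun m => ?_)
  exact (comp_aeval_apply (fun i m => x m i) (Pi.evalAlgHom ℝ (fun _ : ℕ => ℝ) m) Q).trans
    (aeval_eq_eval (x m) ▸ rfl)

lemma hyperrealOfSeq_le {f g : ℕ → ℝ} (h : ∀ m, f m ≤ g m) : hyperrealOfSeq f ≤ hyperrealOfSeq g :=
  ofSeq_le_ofSeq.mpr (.of_forall h)

lemma frequently_lt_of_hyperrealOfSeq_lt {f g : ℕ → ℝ} (h : hyperrealOfSeq f < hyperrealOfSeq g) :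
    ∃ᶠ m in atTop, f m < g m :=
  (ofSeq_lt_ofSeq.mp h).frequently.filter_mono Nat.hyperfilter_le_atTop

lemma abs_hyperrealOfSeq (f : ℕ → ℝ) : |hyperrealOfSeq f| = hyperrealOfSeq fun m => |f m| :=
  Germ.abs_def _

lemma archimedeanValuation_hyperrealOfSeq_lt_one {f : ℕ → ℝ} (hf : Tendsto f atTop (𝓝 0)) :
    archimedeanValuation ℝ* (hyperrealOfSeq f) < 1 :=
  archimedeanValuation_lt_one_iff.mpr <| archimedeanClassMk_pos_of_tendsto <|
    tendsto_ofSeq.mpr (hf.mono_left Nat.hyperfilter_le_atTop)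

lemma archimedeanValuation_hyperrealOfSeq_le_one {f : ℕ → ℝ} {C : ℝ} (hf : ∀ m, |f m| ≤ C) :
    archimedeanValuation ℝ* (hyperrealOfSeq f) ≤ 1 :=
  archimedeanValuation_le_one_iff.mpr <|
    ArchimedeanClass.mk_nonneg_of_le_of_le_of_archimedean coeRingHom
      (hyperrealOfSeq_le fun m => (abs_le.mp (hf m)).1)
      (hyperrealOfSeq_le fun m => (abs_le.mp (hf m)).2)

lemma eval_gradSq_nonneg [Fintype σ] (P : MvPolynomial σ ℝ) (x : σ → ℝ) :
    0 ≤ eval x (gradSq P) := by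
  simp only [gradSq, map_sum, map_pow]
  positivity

lemma frequently_pow_lt_abs_eval_pderiv_pow [Finite σ] (P : MvPolynomial σ ℝ) {y : ℕ → σ → ℝ}
    {C : ℝ} (hy : ∀ m i, |y m i| ≤ C) (hP0 : ∀ m, eval (y m) P ≠ 0)
    (hP : Tendsto (fun m => eval (y m) P) atTop (𝓝 0)) :
    ∃ e : ℕ, ∃ i, ∃ᶠ m in atTop, |eval (y m) P| ^ e < |eval (y m) (pderiv i P)| ^ (e + 1) := by
  cases nonempty_fintype σ
  obtain ⟨a, ha⟩ := exists_forall_exists_archimedeanValuation_pderiv P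
  choose x hxP hle hcrit using fun m => exists_penalized_minimizer P (gradSq P)
    (eval_gradSq_nonneg P) a (y m) (pow_pos (abs_pos.mpr (hP0 m)) 2)
  simp only [sq_abs] at hle hcrit
  set c : ℕ → ℝ := fun m => eval (y m) P
  have hc0 : hyperrealOfSeq c ≠ 0 := fun h => by
    obtain ⟨m, hm⟩ := (Germ.coe_eq.mp h).exists
    exact hP0 m hm
  obtain ⟨e, i, hlt⟩ := ha (x := fun i => hyperrealOfSeq fun m => x m i)
    (y := fun i => hyperrealOfSeq fun m => y m i) (c := hyperrealOfSeq c)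
    (by rw [aeval_hyperrealOfSeq]; exact congr_arg _ (funext hxP)) hc0
    (archimedeanValuation_hyperrealOfSeq_lt_one hP)
    (fun i => archimedeanValuation_hyperrealOfSeq_le_one fun m => hy m i)
    (fun i j => by
      simp only [aeval_hyperrealOfSeq, ← AlgHom.commutes hyperrealOfSeq, ← map_sub, ← map_add,
        ← map_mul, ← map_pow, ← map_ofNat hyperrealOfSeq 2]
      exact congr_arg hyperrealOfSeq (funext fun m => hcrit m i j))
    (by
      simp only [aeval_hyperrealOfSeq, ← AlgHom.commutes hyperrealOfSeq, ← map_sub, ← map_add,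
        ← map_mul, ← map_pow, ← map_sum]
      refine hyperrealOfSeq_le fun m => ?_
      simpa using hle m)
  rw [aeval_hyperrealOfSeq, ← map_pow, ← map_pow, ← map_pow, ← map_pow] at hlt
  have habs := abs_lt_abs_of_archimedeanValuation_lt hlt
  rw [abs_hyperrealOfSeq, abs_hyperrealOfSeq] at habs
  have hfreq := frequently_lt_of_hyperrealOfSeq_lt habs
  simp only [Pi.pow_apply, abs_pow] at hfreq
  exact ⟨e, i, hfreq⟩

theorem exists_abs_eval_pow_le_abs_eval_pderiv_pow [Finite σ] (P : MvPolynomial σ ℝ)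
    {K : Set (σ → ℝ)} (hK : Bornology.IsBounded K) :
    ∃ e : ℕ, ∃ δ > 0, ∀ x ∈ K, eval x P ≠ 0 → |eval x P| < δ →
      ∃ i, |eval x P| ^ e ≤ |eval x (pderiv i P)| ^ (e + 1) := by
  cases nonempty_fintype σ
  by_contra! h
  choose y hyK hy0 hyδ hy using fun m : ℕ => h m (1 / (m + 1)) Nat.one_div_pos_of_nat
  obtain ⟨C, hC⟩ := hK.exists_norm_le
  have hlim : Tendsto (fun m => eval (y m) P) atTop (𝓝 0) :=
    squeeze_zero_norm (fun m => (hyδ m).le) tendsto_one_div_add_atTop_nhds_zero_nat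
  obtain ⟨e, i, hfreq⟩ := frequently_pow_lt_abs_eval_pderiv_pow P
    (fun m i => (norm_le_pi_norm (y m) i).trans (hC _ (hyK m))) hy0 hlim
  obtain ⟨m, hlt, hem⟩ := (hfreq.and_eventually (eventually_ge_atTop e)).exists
  have hle1 : |eval (y m) P| ≤ 1 :=
    (hyδ m).le.trans (div_le_one_of_le₀ (by simp) (by positivity))
  refine hlt.not_ge (le_of_pow_le_pow_left₀ m.succ_ne_zero (by positivity) ?_)
  calc (|eval (y m) (pderiv i P)| ^ (e + 1)) ^ (m + 1)
      = (|eval (y m) (pderiv i P)| ^ (m + 1)) ^ (e + 1) := pow_right_comm _ _ _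
    _ ≤ (|eval (y m) P| ^ m) ^ (e + 1) := pow_le_pow_left₀ (by positivity) (hy m i).le _
    _ ≤ (|eval (y m) P| ^ e) ^ (m + 1) := by
        rw [← pow_mul, ← pow_mul]
        exact pow_le_pow_of_le_one (abs_nonneg _) hle1 (by nlinarith)

end

/-- Positive homogeneity of degree `p`; nothing is asked at `t = 0`, so that the notion passes to
derivatives. -/
def IsPosHomogeneous {V W : Type*} [SMul ℝ V] [SMul ℝ W] (p : ℕ) (f : V → W) : Prop :=
  ∀ t : ℝ, 0 < t → ∀ x, f (t • x) = t ^ p • f x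

namespace IsPosHomogeneous

section

variable {V W : Type*} [NormedAddCommGroup V] [NormedSpace ℝ V] [NormedAddCommGroup W]
  [NormedSpace ℝ W] {p : ℕ} {f : V → W} {x : V}

lemma map_zero (hf : IsPosHomogeneous p f) (hp : p ≠ 0) : f 0 = 0 := by
  have h2 : f 0 = (2 : ℝ) ^ p • f 0 := by simpa using hf 2 two_pos 0
  have h : ((2 : ℝ) ^ p - 1) • f 0 = 0 := by rw [sub_smul, one_smul, ← h2, sub_self]
  exact (smul_eq_zero.mp h).resolve_left (sub_pos.mpr (one_lt_pow₀ one_lt_two hp)).ne'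

lemma map_eq_map_zero (hf : IsPosHomogeneous 0 f) (hc : Continuous f) (x : V) : f x = f 0 := by
  have hlim : Tendsto (fun t : ℝ => f (t • x)) (𝓝[>] 0) (𝓝 (f ((0 : ℝ) • x))) :=
    ((hc.comp (continuous_id.smul continuous_const)).tendsto 0).mono_left nhdsWithin_le_nhds
  rw [zero_smul] at hlim
  refine tendsto_nhds_unique (tendsto_const_nhds.congr' ?_) hlim
  filter_upwards [self_mem_nhdsWithin] with t ht
  rw [hf t ht, pow_zero, one_smul]

lemma map_eq_norm_pow_smul (hf : IsPosHomogeneous p f) (hx : x ≠ 0) :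
    f x = ‖x‖ ^ p • f (NormedSpace.normalize x) := by
  rw [← hf _ (norm_pos_iff.mpr hx), NormedSpace.norm_smul_normalize]

/-- Euler's identity. -/
lemma fderiv_apply_self (hf : IsPosHomogeneous p f) (hd : DifferentiableAt ℝ f x) :
    fderiv ℝ f x x = (p : ℝ) • f x := by
  have hchain : HasDerivAt (fun t : ℝ => f (t • x)) (fderiv ℝ f x x) 1 := by
    refine HasFDerivAt.comp_hasDerivAt (f := fun t : ℝ => t • x) 1 ?_
      (by simpa using (hasDerivAt_id (1 : ℝ)).smul_const x)
    simpa only [one_smul] using hd.hasFDerivAt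
  have hpow : HasDerivAt (fun t : ℝ => t ^ p • f x) ((p : ℝ) • f x) 1 := by
    simpa using (hasDerivAt_pow p (1 : ℝ)).smul_const (f x)
  refine hchain.unique (hpow.congr_of_eventuallyEq ?_)
  filter_upwards [lt_mem_nhds zero_lt_one] with t ht using hf t ht x

protected lemma fderiv (hf : IsPosHomogeneous (p + 1) f) : IsPosHomogeneous p (fderiv ℝ f) := by
  intro t ht x
  have hcomp : (fun y => f (t • y)) = t ^ (p + 1) • f := funext fun y => hf t ht y
  have h : t • fderiv ℝ f (t • x) = t • t ^ p • fderiv ℝ f x := by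
    rw [← fderiv_comp_smul, hcomp, fderiv_const_smul_field, Pi.smul_apply, smul_smul, pow_succ']
  exact smul_right_injective _ ht.ne' h

lemma exists_mvPolynomial_eval {ι : Type*} [Finite ι] (b : Module.Basis ι ℝ V) {p : ℕ}
    {f : V → ℝ} (hf : IsPosHomogeneous p f) (hc : ContDiff ℝ p f) :
    ∃ P : MvPolynomial ι ℝ, ∀ x, f x = MvPolynomial.eval (b.repr x) P := by
  cases nonempty_fintype ι
  induction p generalizing f with
  | zero => exact ⟨MvPolynomial.C (f 0), fun x => by
      rw [MvPolynomial.eval_C, hf.map_eq_map_zero hc.continuous]⟩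
  | succ p ih =>
    have hpartial (i : ι) : ∃ P : MvPolynomial ι ℝ, ∀ x,
        fderiv ℝ f x (b i) = MvPolynomial.eval (b.repr x) P :=
      ih (fun t ht x => by rw [hf.fderiv t ht, smul_apply])
        ((hc.fderiv_right (by norm_cast)).clm_apply contDiff_const)
    choose P hP using hpartial
    refine ⟨MvPolynomial.C ((p + 1 : ℝ)⁻¹) * ∑ i, MvPolynomial.X i * P i, fun x => ?_⟩
    have heuler : (p + 1 : ℝ) * f x = ∑ i, b.repr x i * fderiv ℝ f x (b i) := by
      have hself := hf.fderiv_apply_self (hc.differentiable (by norm_cast) x)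
      conv_lhs at hself => rw [← b.sum_repr x, map_sum, b.sum_repr x]
      simpa using hself.symm
    simp only [map_mul, map_sum, MvPolynomial.eval_C, MvPolynomial.eval_X, ← hP, ← heuler]
    field_simp

end

section

variable {E : Type*} [NormedAddCommGroup E] [InnerProductSpace ℝ E] [CompleteSpace E] {p : ℕ}
  {f : E → ℝ}

protected lemma gradient (hf : IsPosHomogeneous (p + 1) f) : IsPosHomogeneous p (gradient f) := by
  intro t ht x
  rw [gradient, gradient, hf.fderiv t ht, map_smul]

lemma inner_gradient_self {x : E} (hf : IsPosHomogeneous p f) (hd : DifferentiableAt ℝ f x) :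
    ⟪gradient f x, x⟫ = p * f x := by
  rw [inner_gradient_left, hf.fderiv_apply_self hd, smul_eq_mul]

end

end IsPosHomogeneous

section

variable {ι : Type*}

lemma fderiv_apply_basis_eq_eval_pderiv [Finite ι] {V : Type*} [NormedAddCommGroup V]
    [NormedSpace ℝ V] (b : Module.Basis ι ℝ V) {f : V → ℝ} {P : MvPolynomial ι ℝ}
    (hP : ∀ x, f x = MvPolynomial.eval (b.repr x) P) (x : V) (i : ι) :
    fderiv ℝ f x (b i) = MvPolynomial.eval (b.repr x) (MvPolynomial.pderiv i P) := by
  classical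
  cases nonempty_fintype ι
  have h : HasFDerivAt f ((∑ j, MvPolynomial.eval (b.repr x) (MvPolynomial.pderiv j P) •
      (ContinuousLinearMap.proj j : (ι → ℝ) →L[ℝ] ℝ)) ∘L b.equivFunL) x := by
    rw [funext hP]
    exact (hasStrictFDerivAt_mvPolynomial_eval P _).hasFDerivAt.comp x b.equivFunL.hasFDerivAt
  rw [h.fderiv]
  simp [Finsupp.single_apply]

lemma exists_abs_pow_le_norm_gradient_pow [Fintype ι] {E : Type*} [NormedAddCommGroup E]
    [InnerProductSpace ℝ E] [CompleteSpace E] (b : OrthonormalBasis ι ℝ E) {f : E → ℝ}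
    {P : MvPolynomial ι ℝ} (hP : ∀ x, f x = MvPolynomial.eval (b.toBasis.repr x) P) {K : Set E}
    (hK : Bornology.IsBounded K) :
    ∃ e : ℕ, ∃ δ > 0, ∀ x ∈ K, f x ≠ 0 → |f x| < δ → |f x| ^ e ≤ ‖gradient f x‖ ^ (e + 1) := by
  have hbound : Bornology.IsBounded (b.toBasis.equivFunL '' K) :=
    b.toBasis.equivFunL.lipschitz.isBounded_image hK
  obtain ⟨e, δ, hδ, h⟩ := exists_abs_eval_pow_le_abs_eval_pderiv_pow P hbound
  refine ⟨e, δ, hδ, fun x hx hx0 hxδ => ?_⟩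
  obtain ⟨i, hi⟩ := h _ (Set.mem_image_of_mem _ hx) (by rwa [hP] at hx0) (by rwa [hP] at hxδ)
  have hpartial : |MvPolynomial.eval (b.toBasis.repr x) (MvPolynomial.pderiv i P)| ≤
      ‖gradient f x‖ := by
    rw [← fderiv_apply_basis_eq_eval_pderiv b.toBasis hP, ← inner_gradient_left]
    simpa using abs_real_inner_le_norm (gradient f x) (b i)
  rw [hP]
  exact hi.trans (pow_le_pow_left₀ (abs_nonneg _) hpartial _)

end

lemma tendsto_atBot_of_hasDerivAt_le {φ ψ : ℝ → ℝ} {b c : ℝ} (hc : 0 < c)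
    (h : ∀ᶠ s in 𝓝[<] b, ∃ φ' ψ', HasDerivAt φ φ' s ∧ HasDerivAt ψ ψ' s ∧ φ' ≤ c * ψ')
    (hψ : Tendsto ψ (𝓝[<] b) atBot) : Tendsto φ (𝓝[<] b) atBot := by
  obtain ⟨a, hab, h⟩ := mem_nhdsLT_iff_exists_Ico_subset.mp h
  simp only [Set.subset_def, Set.mem_ofPred_eq] at h
  choose! φ' ψ' hφ' hψ' hle using h
  have hderiv : ∀ s ∈ Set.Ico a b, HasDerivAt (fun s => φ s - c * ψ s) (φ' s - c * ψ' s) s :=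
    fun s hs => (hφ' s hs).sub ((hψ' s hs).const_mul c)
  have hanti : AntitoneOn (fun s => φ s - c * ψ s) (Set.Ico a b) :=
    antitoneOn_of_hasDerivWithinAt_nonpos (convex_Ico a b)
      (fun s hs => (hderiv s hs).continuousAt.continuousWithinAt)
      (fun s hs => (hderiv s (interior_subset hs)).hasDerivWithinAt)
      (fun s hs => sub_nonpos.mpr (hle s (interior_subset hs)))
  refine tendsto_atBot_mono' _ ?_
    (tendsto_atBot_add_const_right _ (φ a - c * ψ a) (hψ.const_mul_atBot hc))
  filter_upwards [Ico_mem_nhdsLT hab] with s hs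
  linarith [hanti ⟨le_rfl, hab⟩ hs hs.1]

lemma one_le_div_sq_mul_rpow {a g : ℝ} {e : ℕ} (ha : 0 < a) (hg : 0 ≤ g)
    (h : a ^ e ≤ g ^ (e + 1)) : 1 ≤ (g / a) ^ 2 * a ^ (2 / (e + 1) : ℝ) := by
  have hbase : 1 ≤ g / a * a ^ (1 / (e + 1) : ℝ) := by
    refine (one_le_pow_iff_of_nonneg (by positivity) e.succ_ne_zero).mp ?_
    rw [mul_pow, ← Real.rpow_mul_natCast ha.le, Nat.cast_succ, one_div_mul_cancel (by positivity),
      Real.rpow_one, div_pow, pow_succ a, ← div_div, div_mul_cancel₀ _ ha.ne']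
    exact (one_le_div (by positivity)).mpr h
  calc 1 ≤ (g / a * a ^ (1 / (e + 1) : ℝ)) ^ 2 := one_le_pow₀ hbase
    _ = (g / a) ^ 2 * a ^ (2 / (e + 1) : ℝ) := by
      rw [mul_pow, ← Real.rpow_mul_natCast ha.le]
      congr 2
      push_cast
      ring

section

variable {E : Type*} [NormedAddCommGroup E] [InnerProductSpace ℝ E] [CompleteSpace E]

/-- A half-trajectory, parametrized by `[0, L)`, of the unit gradient field of `f` that tends to the
origin. -/
structure IsGradientHalfTrajectory (f : E → ℝ) (γ : ℝ → E) (L : ℝ) : Prop where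
  pos : 0 < L
  gradient_ne_zero : ∀ s ∈ Set.Ico 0 L, gradient f (γ s) ≠ 0
  hasDerivAt : ∀ s ∈ Set.Ico 0 L,
    HasDerivAt γ (NormedSpace.normalize (gradient f (γ s))) s
  tendsto_zero : Tendsto γ (𝓝[<] L) (𝓝 0)

/-- By Euler's identity, for `f` positively homogeneous of degree `p` and a unit vector `u` this is
`(‖∇'f u‖ / f u) ^ 2`, where `∇'` is the gradient along the unit sphere. -/
noncomputable def sphericalLogSlopeSq (f : E → ℝ) (p : ℕ) (u : E) : ℝ :=
  (‖gradient f u‖ / f u) ^ 2 - p ^ 2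

namespace IsGradientHalfTrajectory

variable {f : E → ℝ} {γ : ℝ → E} {L s : ℝ} {p : ℕ}

lemma eventually_mem (hγ : IsGradientHalfTrajectory f γ L) : ∀ᶠ s in 𝓝[<] L, s ∈ Set.Ico 0 L :=
  Ico_mem_nhdsLT hγ.pos

lemma hasDerivAt_comp (hγ : IsGradientHalfTrajectory f γ L) (hs : s ∈ Set.Ico 0 L) :
    HasDerivAt (fun s => f (γ s)) ‖gradient f (γ s)‖ s := by
  have hgrad := hγ.gradient_ne_zero s hs
  have hd : DifferentiableAt ℝ f (γ s) := by
    contrapose! hgrad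
    exact gradient_eq_zero_of_not_differentiableAt hgrad
  refine (hd.hasFDerivAt.comp_hasDerivAt s (hγ.hasDerivAt s hs)).congr_deriv ?_
  rw [← inner_gradient_left, NormedSpace.normalize, inner_smul_right, real_inner_self_eq_norm_sq,
    pow_two, inv_mul_cancel_left₀ (norm_ne_zero_iff.mpr hgrad)]

lemma strictMonoOn_comp (hγ : IsGradientHalfTrajectory f γ L) :
    StrictMonoOn (fun s => f (γ s)) (Set.Ico 0 L) :=
  strictMonoOn_of_hasDerivWithinAt_pos (convex_Ico 0 L)
    (fun _ hs => (hγ.hasDerivAt_comp hs).continuousAt.continuousWithinAt)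
    (fun _ hs => (hγ.hasDerivAt_comp (interior_subset hs)).hasDerivWithinAt)
    (fun _ hs => norm_pos_iff.mpr (hγ.gradient_ne_zero _ (interior_subset hs)))

lemma comp_lt_map_zero (hγ : IsGradientHalfTrajectory f γ L) (hf : ContinuousAt f 0)
    (hs : s ∈ Set.Ico 0 L) : f (γ s) < f 0 := by
  obtain ⟨t, hst, htL⟩ := exists_between hs.2
  have ht : t ∈ Set.Ico 0 L := ⟨hs.1.trans hst.le, htL⟩
  refine (hγ.strictMonoOn_comp hs ht hst).trans_le
    (ge_of_tendsto (hf.tendsto.comp hγ.tendsto_zero) ?_)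
  filter_upwards [Ico_mem_nhdsLT htL] with r hr
  exact hγ.strictMonoOn_comp.monotoneOn ht ⟨ht.1.trans hr.1, hr.2⟩ hr.1

lemma ne_zero (hγ : IsGradientHalfTrajectory f γ L) (hf : ContinuousAt f 0)
    (hs : s ∈ Set.Ico 0 L) : γ s ≠ 0 :=
  fun h => (hγ.comp_lt_map_zero hf hs).ne (by rw [h])

lemma comp_neg (hγ : IsGradientHalfTrajectory f γ L) (hf : ContinuousAt f 0)
    (hhom : IsPosHomogeneous p f) (hp : p ≠ 0) (hs : s ∈ Set.Ico 0 L) : f (γ s) < 0 :=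
  hhom.map_zero hp ▸ hγ.comp_lt_map_zero hf hs

lemma comp_normalize_neg (hγ : IsGradientHalfTrajectory f γ L) (hf : ContinuousAt f 0)
    (hhom : IsPosHomogeneous p f) (hp : p ≠ 0) (hs : s ∈ Set.Ico 0 L) :
    f (NormedSpace.normalize (γ s)) < 0 := by
  have hneg := hγ.comp_neg hf hhom hp hs
  rw [hhom.map_eq_norm_pow_smul (hγ.ne_zero hf hs)] at hneg
  exact neg_of_mul_neg_right hneg (by positivity)

lemma hasDerivAt_log_norm (hγ : IsGradientHalfTrajectory f γ L) (hf : Differentiable ℝ f)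
    (hhom : IsPosHomogeneous p f) (hs : s ∈ Set.Ico 0 L) :
    HasDerivAt (fun s => Real.log ‖γ s‖)
      (p * f (γ s) / (‖gradient f (γ s)‖ * ‖γ s‖ ^ 2)) s := by
  have hne : ‖γ s‖ ^ 2 ≠ 0 :=
    pow_ne_zero 2 (norm_ne_zero_iff.mpr (hγ.ne_zero hf.continuous.continuousAt hs))
  have h := ((hγ.hasDerivAt s hs).norm_sq.log hne).div_const 2
  simp only [Real.log_pow, Nat.cast_ofNat, mul_div_cancel_left₀ _ (two_ne_zero' ℝ)] at h
  refine h.congr_deriv ?_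
  rw [NormedSpace.normalize, inner_smul_right, real_inner_comm, hhom.inner_gradient_self (hf _)]
  field_simp

lemma tendsto_log_norm (hγ : IsGradientHalfTrajectory f γ L) (hf : ContinuousAt f 0) :
    Tendsto (fun s => Real.log ‖γ s‖) (𝓝[<] L) atBot := by
  refine Real.tendsto_log_nhdsGT_zero.comp
    (tendsto_nhdsWithin_iff.mpr ⟨by simpa using hγ.tendsto_zero.norm, ?_⟩)
  exact hγ.eventually_mem.mono fun s hs => norm_pos_iff.mpr (hγ.ne_zero hf hs)

lemma sphericalLogSlopeSq_normalize (hhom : IsPosHomogeneous p f) (hp : p ≠ 0) {x : E}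
    (hx : x ≠ 0) : sphericalLogSlopeSq f p (NormedSpace.normalize x) =
      (‖gradient f x‖ * ‖x‖ / f x) ^ 2 - p ^ 2 := by
  obtain ⟨k, rfl⟩ := Nat.exists_eq_succ_of_ne_zero hp
  rw [hhom.map_eq_norm_pow_smul hx, hhom.gradient.map_eq_norm_pow_smul hx, norm_smul, norm_pow,
    norm_norm, smul_eq_mul, mul_right_comm, ← pow_succ,
    mul_div_mul_left _ _ (pow_ne_zero _ (norm_ne_zero_iff.mpr hx)), sphericalLogSlopeSq]

lemma hasDerivAt_log_comp_normalize (hγ : IsGradientHalfTrajectory f γ L)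
    (hf : Differentiable ℝ f) (hhom : IsPosHomogeneous p f) (hp : p ≠ 0) (hs : s ∈ Set.Ico 0 L) :
    HasDerivAt (fun s => Real.log (f (NormedSpace.normalize (γ s))))
      (sphericalLogSlopeSq f p (NormedSpace.normalize (γ s)) / p *
        (p * f (γ s) / (‖gradient f (γ s)‖ * ‖γ s‖ ^ 2))) s := by
  have hγs : γ s ≠ 0 := hγ.ne_zero hf.continuous.continuousAt hs
  have hfs : f (γ s) ≠ 0 := (hγ.comp_neg hf.continuous.continuousAt hhom hp hs).ne
  have hlog : HasDerivAt (fun s => Real.log (f (γ s)) - p * Real.log ‖γ s‖) _ s :=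
    ((hγ.hasDerivAt_comp hs).log hfs).sub ((hγ.hasDerivAt_log_norm hf hhom hs).const_mul (p : ℝ))
  refine (hlog.congr_of_eventuallyEq ?_).congr_deriv ?_
  · filter_upwards [(hγ.hasDerivAt s hs).continuousAt.eventually_ne hγs,
      (hγ.hasDerivAt_comp hs).continuousAt.eventually_ne hfs] with t hγt hft
    rw [hhom.map_eq_norm_pow_smul hγt, smul_eq_mul] at hft ⊢
    rw [Real.log_mul (left_ne_zero_of_mul hft) (right_ne_zero_of_mul hft), Real.log_pow,
      add_sub_cancel_left]
  · have hgrad := norm_ne_zero_iff.mpr (hγ.gradient_ne_zero s hs)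
    have hnorm := norm_ne_zero_iff.mpr hγs
    rw [sphericalLogSlopeSq_normalize hhom hp hγs]
    field_simp

/-- Along the trajectory `|f u| ^ α`, `u` the secant, would otherwise decrease at least as fast as
a positive multiple of `log ‖γ‖`, hence tend to `-∞`. -/
lemma frequently_sphericalLogSlopeSq_mul_abs_rpow_lt (hγ : IsGradientHalfTrajectory f γ L)
    (hf : Differentiable ℝ f) (hhom : IsPosHomogeneous p f) (hp : p ≠ 0) {α c : ℝ} (hα : 0 < α)
    (hc : 0 < c) : ∃ᶠ s in 𝓝[<] L, sphericalLogSlopeSq f p (NormedSpace.normalize (γ s)) *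
      |f (NormedSpace.normalize (γ s))| ^ α < c := by
  by_contra hev
  simp only [not_frequently, not_lt] at hev
  set y : ℝ → ℝ := fun s => f (NormedSpace.normalize (γ s))
  have hlim : Tendsto (fun s => Real.exp (α * Real.log (y s))) (𝓝[<] L) atBot := by
    refine tendsto_atBot_of_hasDerivAt_le (by positivity : 0 < c * α / p) ?_
      (hγ.tendsto_log_norm hf.continuous.continuousAt)
    filter_upwards [hev, hγ.eventually_mem] with s hcs hs
    have hneg := hγ.comp_neg hf.continuous.continuousAt hhom hp hs
    refine ⟨_, _, ((hγ.hasDerivAt_log_comp_normalize hf hhom hp hs).const_mul α).exp,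
      hγ.hasDerivAt_log_norm hf hhom hs, ?_⟩
    have hy0 : y s ≠ 0 := (hγ.comp_normalize_neg hf.continuous.continuousAt hhom hp hs).ne
    have hy : |y s| ^ α = Real.exp (α * Real.log (y s)) := by
      rw [Real.rpow_def_of_pos (abs_pos.mpr hy0), Real.log_abs, mul_comm]
    set κ := sphericalLogSlopeSq f p (NormedSpace.normalize (γ s))
    set r := p * f (γ s) / (‖gradient f (γ s)‖ * ‖γ s‖ ^ 2)
    have hr : r ≤ 0 := div_nonpos_of_nonpos_of_nonneg
      (mul_nonpos_of_nonneg_of_nonpos (Nat.cast_nonneg p) hneg.le) (by positivity)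
    calc Real.exp (α * Real.log (y s)) * (α * (κ / p * r))
        = κ * |y s| ^ α * (α / p * r) := by rw [hy]; ring
      _ ≤ c * (α / p * r) :=
        mul_le_mul_of_nonpos_right hcs (mul_nonpos_of_nonneg_of_nonpos (by positivity) hr)
      _ = c * α / p * r := by ring
  obtain ⟨s, hs⟩ := (hlim.eventually_lt_atBot 0).exists
  exact hs.not_gt (Real.exp_pos _)

/-- Otherwise Łojasiewicz's inequality `1 ≤ (‖∇f u‖ / |f u|) ^ 2 * |f u| ^ (2 / (e + 1))` keeps
`sphericalLogSlopeSq f p u * |f u| ^ (2 / (e + 1))` away from zero along the secants `u → ν`. -/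
lemma map_secant_limit_ne_zero (hγ : IsGradientHalfTrajectory f γ L)
    (hf : Differentiable ℝ f) (hhom : IsPosHomogeneous p f) (hp : p ≠ 0) {e : ℕ} {δ : ℝ}
    (hδ : 0 < δ) (hloj : ∀ u ∈ Metric.sphere (0 : E) 1, f u ≠ 0 → |f u| < δ →
      |f u| ^ e ≤ ‖gradient f u‖ ^ (e + 1))
    {ν : E} (hν : Tendsto (fun s => NormedSpace.normalize (γ s)) (𝓝[<] L) (𝓝 ν)) : f ν ≠ 0 := by
  intro hν0
  set y : ℝ → ℝ := fun s => |f (NormedSpace.normalize (γ s))|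
  have hα : (0 : ℝ) < 2 / (e + 1) := by positivity
  have hy0 : Tendsto y (𝓝[<] L) (𝓝 0) := by
    simpa [hν0] using ((hf.continuous.tendsto ν).comp hν).abs
  have hyα : Tendsto (fun s => (p : ℝ) ^ 2 * y s ^ (2 / (e + 1) : ℝ)) (𝓝[<] L) (𝓝 0) := by
    simpa [Real.zero_rpow hα.ne'] using (hy0.rpow_const (.inr hα.le)).const_mul ((p : ℝ) ^ 2)
  refine hγ.frequently_sphericalLogSlopeSq_mul_abs_rpow_lt hf hhom hp hα one_half_pos ?_
  filter_upwards [hγ.eventually_mem, hy0.eventually_lt_const hδ,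
    hyα.eventually_lt_const one_half_pos] with s hs hsδ hsα
  have hu : NormedSpace.normalize (γ s) ∈ Metric.sphere (0 : E) 1 := by
    rw [mem_sphere_zero_iff_norm, NormedSpace.norm_normalize_eq_one_iff]
    exact hγ.ne_zero hf.continuous.continuousAt hs
  have hne := (hγ.comp_normalize_neg hf.continuous.continuousAt hhom hp hs).ne
  have hloj_s := one_le_div_sq_mul_rpow (abs_pos.mpr hne) (norm_nonneg _) (hloj _ hu hne hsδ)
  rw [div_pow, sq_abs, ← div_pow] at hloj_s
  rw [sphericalLogSlopeSq, sub_mul]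
  linarith

lemma sphericalLogSlopeSq_secant_limit_nonpos (hγ : IsGradientHalfTrajectory f γ L)
    (hf : Differentiable ℝ f) (hhom : IsPosHomogeneous p f) (hp : p ≠ 0) {ν : E}
    (hgrad : ContinuousAt (gradient f) ν) (hfν : f ν ≠ 0)
    (hν : Tendsto (fun s => NormedSpace.normalize (γ s)) (𝓝[<] L) (𝓝 ν)) :
    sphericalLogSlopeSq f p ν ≤ 0 := by
  by_contra! hpos
  have hfcont : ContinuousAt f ν := hf.continuous.continuousAt
  have hcont : ContinuousAt (fun u => sphericalLogSlopeSq f p u * |f u| ^ (1 : ℝ)) ν := by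
    simp only [Real.rpow_one]
    exact (((hgrad.norm.div hfcont hfν).pow 2).sub_const _).mul hfcont.abs
  have hlim : 0 < sphericalLogSlopeSq f p ν * |f ν| ^ (1 : ℝ) := by positivity
  refine hγ.frequently_sphericalLogSlopeSq_mul_abs_rpow_lt hf hhom hp one_pos (half_pos hlim) ?_
  filter_upwards [(hcont.tendsto.comp hν).eventually_const_lt (half_lt_self hlim)] with s hs
  exact hs.not_gt

lemma norm_secant_limit (hγ : IsGradientHalfTrajectory f γ L) (hf : ContinuousAt f 0) {ν : E}
    (hν : Tendsto (fun s => NormedSpace.normalize (γ s)) (𝓝[<] L) (𝓝 ν)) : ‖ν‖ = 1 := by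
  refine tendsto_nhds_unique hν.norm (tendsto_const_nhds.congr' ?_)
  filter_upwards [hγ.eventually_mem] with s hs
  exact (NormedSpace.norm_normalize_eq_one_iff.mpr (hγ.ne_zero hf hs)).symm

end IsGradientHalfTrajectory

lemma gradient_eq_smul_of_sphericalLogSlopeSq_nonpos {f : E → ℝ} {p : ℕ} {u : E}
    (hhom : IsPosHomogeneous p f) (hf : DifferentiableAt ℝ f u) (hu : ‖u‖ = 1) (hfu : f u ≠ 0)
    (hslope : sphericalLogSlopeSq f p u ≤ 0) : gradient f u = (p * f u) • u := by
  have hle : ‖gradient f u‖ ^ 2 ≤ (p * f u) ^ 2 := by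
    rwa [sphericalLogSlopeSq, sub_nonpos, div_pow, div_le_iff₀ (by positivity), ← mul_pow] at hslope
  have hsq : ‖gradient f u - (p * f u) • u‖ ^ 2 ≤ 0 := by
    rw [norm_sub_sq_real, inner_smul_right, hhom.inner_gradient_self hf, norm_smul, hu, mul_one,
      Real.norm_eq_abs, sq_abs]
    linarith
  exact sub_eq_zero.mp (norm_eq_zero.mp (pow_eq_zero_iff two_ne_zero |>.mp
    (le_antisymm hsq (sq_nonneg _))))

lemma differentiable_gradient {f : E → ℝ} (hf : ContDiff ℝ 2 f) : Differentiable ℝ (gradient f) :=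
  (InnerProductSpace.toDual ℝ E).symm.toContinuousLinearEquiv.differentiable.comp
    ((hf.fderiv_right (m := 1) (by norm_num)).differentiable one_ne_zero)

end

theorem homogeneous_secant_limit_is_eigenvector_of_hessian_general {E : Type*}
    [NormedAddCommGroup E] [InnerProductSpace ℝ E] [FiniteDimensional ℝ E] {f : E → ℝ} {p : ℕ}
    (hf : ContDiff ℝ p f) (hp : 2 ≤ p) (hhom : IsPosHomogeneous p f) {γ : ℝ → E} {L : ℝ}
    (hγ : IsGradientHalfTrajectory f γ L) {ν : E}
    (hν : Tendsto (fun s => NormedSpace.normalize (γ s)) (𝓝[<] L) (𝓝 ν)) :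
    f ν ≠ 0 ∧ fderiv ℝ (gradient f) ν ν = ((p : ℝ) * ((p : ℝ) - 1) * f ν) • ν ∧
      (p : ℝ) * ((p : ℝ) - 1) * f ν ≠ 0 := by
  obtain ⟨k, rfl⟩ := Nat.exists_eq_add_of_le' (one_le_two.trans hp)
  have hk : (k : ℝ) ≠ 0 := by norm_cast; omega
  have hd : Differentiable ℝ f := hf.differentiable (by norm_cast)
  have hgrad : Differentiable ℝ (gradient f) :=
    differentiable_gradient (hf.of_le (by norm_cast))
  have hfν : f ν ≠ 0 := by
    obtain ⟨P, hP⟩ := hhom.exists_mvPolynomial_eval (stdOrthonormalBasis ℝ E).toBasis hf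
    obtain ⟨e, δ, hδ, hloj⟩ := exists_abs_pow_le_norm_gradient_pow _ hP Metric.isBounded_sphere
    exact hγ.map_secant_limit_ne_zero hd hhom (by omega) hδ hloj hν
  have hgradν : gradient f ν = ((k + 1 : ℕ) * f ν) • ν :=
    gradient_eq_smul_of_sphericalLogSlopeSq_nonpos hhom (hd ν)
      (hγ.norm_secant_limit hd.continuous.continuousAt hν) hfν
      (hγ.sphericalLogSlopeSq_secant_limit_nonpos hd hhom (by omega) (hgrad ν).continuousAt hfν hν)
  simp only [Nat.cast_add_one, add_sub_cancel_right] at hgradν ⊢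
  refine ⟨hfν, ?_, mul_ne_zero (mul_ne_zero k.cast_add_one_ne_zero hk) hfν⟩
  rw [hhom.gradient.fderiv_apply_self (hgrad ν), hgradν, smul_smul, mul_left_comm, mul_assoc]

/-- for a homogeneous polynomial `f` of degree `p ≥ 2`, along a gradient trajectory
with limit of secants `ν` one has `f(ν) ≠ 0` and `Hs(f)(ν)·ν = p(p-1)f(ν)·ν` with
`p(p-1)f(ν) ≠ 0`. -/
theorem homogeneous_secant_limit_is_eigenvector_of_hessian
    {n : ℕ} (hn : 2 ≤ n)
    (f : EuclideanSpace ℝ (Fin n) → ℝ)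
    (hfan : AnalyticOnNhd ℝ f Set.univ)
    (p : ℕ) (hp : 2 ≤ p)
    (hhom : ∀ t : ℝ, 0 ≤ t → ∀ x : EuclideanSpace ℝ (Fin n), f (t • x) = t ^ p * f x)
    (L : ℝ) (hL : 0 < L)
    (γ : ℝ → EuclideanSpace ℝ (Fin n))
    (hγreg : ∀ s ∈ Set.Ico (0 : ℝ) L, gradient f (γ s) ≠ 0)
    (hγode : ∀ s ∈ Set.Ico (0 : ℝ) L,
      HasDerivAt γ (‖gradient f (γ s)‖⁻¹ • gradient f (γ s)) s)
    (hfneg : f (γ 0) < 0)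
    (hfmono : StrictMonoOn (fun s => f (γ s)) (Set.Ico (0 : ℝ) L))
    (hγlim : Tendsto γ (𝓝[<] L) (𝓝 0))
    (ν : EuclideanSpace ℝ (Fin n)) (hν1 : ‖ν‖ = 1)
    (hνlim : Tendsto (fun s => ‖γ s‖⁻¹ • γ s) (𝓝[<] L) (𝓝 ν)) :
    f ν ≠ 0 ∧
    fderiv ℝ (gradient f) ν ν = (((p : ℝ) * ((p : ℝ) - 1)) * f ν) • ν ∧
    ((p : ℝ) * ((p : ℝ) - 1)) * f ν ≠ 0 :=
  homogeneous_secant_limit_is_eigenvector_of_hessian_general hfan.contDiff hp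
    (fun t ht x => hhom t ht.le x) ⟨hL, hγreg, hγode, hγlim⟩ hνlim
end

section
/- If γ is non-oscillating at O, then with m and β as in the Kurdyka–Mostowski–Parusiński expansion along γ, the number m·β is an asymptotic critical value of the function g(x) = |x|^{1−m}·|∇f(x)|, witnessed along γ: g(x) → mβ and |x|·|∇g(x)| → 0 as x → O along γ. -/
open scoped RealInnerProductSpace Topology
open Filter

/-!
Non-oscillation makes the one-sided limit `e` of the unit field `∇f/|∇f|` along `γ` exist: squared
components of the normalized field are quotients of analytic functions, and such a quotient
eventually stays on one side of each level. Hence `γ` is tangent to `-e` at the origin,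
`|γ(s)| ~ L - s`, and the radial derivative of `f` controls all of `∇f`, so that
`|x|^{1-m} ∇f → m β e`.

Multiplied by `|x|`, the gradient of `g` is the sum of a radial term, which tends to
`(1 - m) m β (-e)`, and of the Hessian term `|x|^{2-m} D(∇f)(∇f/|∇f|)`, which is `|x|^{2-m}` times
the derivative of `∇f` along `γ`. Non-oscillation also provides an extended limit of each component
of the Hessian term, and L'Hôpital's rule, read backwards, identifies it: the limit is
`-(m - 1) m β e`, which cancels the radial term.
-/

open Asymptotics NormedSpace Set InnerProductSpace
open scoped Gradient

section Limits

variable {ι : Type*} {l : Filter ι} {u : ι → ℝ}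

/-- The function `u` does not oscillate about any real level along the filter `l`; unlike
monotonicity, this needs no order on the source. -/
def CrossesNoLevel (u : ι → ℝ) (l : Filter ι) : Prop :=
  ∀ c, (∀ᶠ i in l, u i ≤ c) ∨ ∀ᶠ i in l, c ≤ u i

namespace CrossesNoLevel

theorem not_frequently_lt_and_frequently_gt (hu : CrossesNoLevel u l) (c : ℝ) :
    ¬((∃ᶠ i in l, u i < c) ∧ ∃ᶠ i in l, c < u i) := by
  rintro ⟨hlt, hgt⟩
  rcases hu c with h | h
  · exact hgt (h.mono fun _ => not_lt.2)
  · exact hlt (h.mono fun _ => not_lt.2)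

theorem exists_tendsto_ereal (hu : CrossesNoLevel u l) :
    ∃ T : EReal, Tendsto (fun i => (u i : EReal)) l (𝓝 T) := by
  refine tendsto_of_no_upcrossings dense_univ fun a _ b _ hab ⟨ha, hb⟩ => ?_
  obtain ⟨c, hac, hcb⟩ := EReal.lt_iff_exists_real_btwn.1 hab
  exact hu.not_frequently_lt_and_frequently_gt c
    ⟨ha.mono fun _ h => EReal.coe_lt_coe_iff.1 (h.trans hac),
      hb.mono fun _ h => EReal.coe_lt_coe_iff.1 (hcb.trans h)⟩

theorem exists_tendsto (hu : CrossesNoLevel u l) (hle : l.IsBoundedUnder (· ≤ ·) u)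
    (hge : l.IsBoundedUnder (· ≥ ·) u) : ∃ T, Tendsto u l (𝓝 T) :=
  tendsto_of_no_upcrossings dense_univ (fun a _ _ _ hab h =>
    hu.not_frequently_lt_and_frequently_gt a ⟨h.1, h.2.mono fun _ => hab.trans⟩) hle hge

end CrossesNoLevel

theorem exists_tendsto_of_tendsto_sq {T : ℝ}
    (hsign : (∀ᶠ i in l, u i ≤ 0) ∨ ∀ᶠ i in l, 0 ≤ u i)
    (hsq : Tendsto (fun i => u i ^ 2) l (𝓝 T)) : ∃ S, Tendsto u l (𝓝 S) := by
  rcases hsign with hneg | hpos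
  · refine ⟨-√T, hsq.sqrt.neg.congr' ?_⟩
    filter_upwards [hneg] with i hi
    rw [Real.sqrt_sq_eq_abs, abs_of_nonpos hi, neg_neg]
  · refine ⟨√T, hsq.sqrt.congr' ?_⟩
    filter_upwards [hpos] with i hi
    exact Real.sqrt_sq hi

variable {E : Type*} [NormedAddCommGroup E] [InnerProductSpace ℝ E] [FiniteDimensional ℝ E]

theorem tendsto_of_forall_tendsto_inner {h : ι → E} {w : E}
    (hw : ∀ v, Tendsto (fun i => ⟪v, h i⟫) l (𝓝 ⟪v, w⟫)) : Tendsto h l (𝓝 w) := by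
  let b := stdOrthonormalBasis ℝ E
  have hsum := tendsto_finsetSum Finset.univ fun j _ => (hw (b j)).smul_const (b j)
  simpa only [b.sum_repr'] using hsum

theorem exists_tendsto_of_forall_exists_tendsto_inner {h : ι → E}
    (hw : ∀ v, ∃ T, Tendsto (fun i => ⟪v, h i⟫) l (𝓝 T)) : ∃ w, Tendsto h l (𝓝 w) := by
  let b := stdOrthonormalBasis ℝ E
  choose T hT using hw
  have hsum := tendsto_finsetSum Finset.univ fun j _ => (hT (b j)).smul_const (b j)
  simp only [b.sum_repr'] at hsum
  exact ⟨_, hsum⟩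

end Limits

section LeftLimits

theorem tendsto_slope_of_tendsto_deriv {E : Type*} [NormedAddCommGroup E] [NormedSpace ℝ E]
    {γ γ' : ℝ → E} {L : ℝ} {x e : E} (hγ : Tendsto γ (𝓝[<] L) (𝓝 x))
    (hderiv : ∀ᶠ s in 𝓝[<] L, HasDerivAt γ (γ' s) s) (hγ' : Tendsto γ' (𝓝[<] L) (𝓝 e)) :
    Tendsto (fun s => (s - L)⁻¹ • (γ s - x)) (𝓝[<] L) (𝓝 e) := by
  let δ := Function.update γ L x
  have hδγ : ∀ {s}, s < L → δ s = γ s := fun hs => Function.update_of_ne hs.ne _ _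
  have hδ' : ∀ᶠ s in 𝓝[<] L, HasDerivAt δ (γ' s) s := by
    filter_upwards [hderiv, self_mem_nhdsWithin] with s hs hsL
    exact hs.congr_of_eventuallyEq ((eventually_lt_nhds hsL).mono fun _ => hδγ)
  have hcont : ContinuousWithinAt δ (Iio L) L := by
    refine continuousWithinAt_update_same.2 ?_
    rwa [sdiff_singleton_eq_self self_notMem_Iio]
  have hL : HasDerivWithinAt δ e (Iic L) L :=
    hasDerivWithinAt_Iic_of_tendsto_deriv (s := {s | s < L ∧ HasDerivAt δ (γ' s) s})
      (fun s hs => hs.2.differentiableAt.differentiableWithinAt)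
      (hcont.mono fun s hs => hs.1) (inter_mem self_mem_nhdsWithin hδ')
      (hγ'.congr' (hδ'.mono fun s h => h.deriv.symm))
  refine ((hasDerivWithinAt_iff_tendsto_slope' self_notMem_Iio).1
    (hL.mono Iio_subset_Iic_self)).congr' ?_
  filter_upwards [self_mem_nhdsWithin] with s hs
  rw [slope_def_module, hδγ hs, show δ L = x from Function.update_self ..]

/-- A converse of L'Hôpital's rule: the quotient of the derivatives is only assumed to have some
extended limit, and the limit of `F s / (L - s) ^ α` determines it. -/
theorem tendsto_rpow_mul_deriv_of_tendsto_div_rpow {F F' : ℝ → ℝ} {L α C : ℝ} (hα : 0 < α)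
    (hderiv : ∀ᶠ s in 𝓝[<] L, HasDerivAt F (F' s) s)
    (hF : Tendsto (fun s => F s / (L - s) ^ α) (𝓝[<] L) (𝓝 C)) {T : EReal}
    (hT : Tendsto (fun s => (((L - s) ^ (1 - α) * F' s : ℝ) : EReal)) (𝓝[<] L) (𝓝 T)) :
    Tendsto (fun s => (L - s) ^ (1 - α) * F' s) (𝓝[<] L) (𝓝 (-(α * C))) := by
  have hpos : ∀ᶠ s in 𝓝[<] L, 0 < L - s :=
    eventually_nhdsWithin_of_forall fun s hs => sub_pos.2 hs
  have hpow : Tendsto (fun s => (L - s) ^ α) (𝓝[<] L) (𝓝 0) := by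
    have hcont : ContinuousAt (fun s => (L - s) ^ α) L :=
      (continuousAt_const.sub continuousAt_id).rpow_const (Or.inr hα.le)
    simpa [Real.zero_rpow hα.ne'] using hcont.tendsto.mono_left nhdsWithin_le_nhds
  have hF0 : Tendsto F (𝓝[<] L) (𝓝 0) := by
    have h := hF.mul hpow
    rw [mul_zero] at h
    refine h.congr' ?_
    filter_upwards [hpos] with s hs
    exact div_mul_cancel₀ _ (Real.rpow_pos_of_pos hs α).ne'
  have hpow_deriv : ∀ᶠ s in 𝓝[<] L,
      HasDerivAt (fun s => -((L - s) ^ α / α)) ((L - s) ^ (α - 1)) s := by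
    filter_upwards [hpos] with s hs
    have h := ((hasDerivAt_id s).const_sub L).rpow_const (p := α) (Or.inl hs.ne')
    exact (h.div_const α).neg.congr_deriv (by simp only [id]; field_simp)
  have hquot : Tendsto (fun s => F' s / (L - s) ^ (α - 1)) (𝓝[<] L)
      (comap Real.toEReal (𝓝 T)) := by
    refine tendsto_comap_iff.2 (hT.congr' ?_)
    filter_upwards [hpos] with s hs
    rw [Function.comp, ← neg_sub α 1, Real.rpow_neg hs.le, mul_comm, div_eq_mul_inv]
  have hlhop := tendsto_comap_iff.1 <| HasDerivAt.lhopital_zero_nhdsLT hderiv hpow_deriv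
    (hpos.mono fun s hs => (Real.rpow_pos_of_pos hs _).ne') hF0
    (by simpa using (hpow.div_const α).neg) hquot
  have hlim : Tendsto (fun s => F s / -((L - s) ^ α / α)) (𝓝[<] L) (𝓝 (-(α * C))) := by
    refine (hF.const_mul α).neg.congr fun s => ?_
    rw [div_neg, div_div_eq_mul_div, mul_div_assoc', mul_comm]
  have hTC : T = ((-(α * C) : ℝ) : EReal) :=
    tendsto_nhds_unique hlhop (EReal.tendsto_coe.2 hlim)
  exact EReal.tendsto_coe.1 (hTC ▸ hT)

end LeftLimits

section Gradient

variable {E : Type*} [NormedAddCommGroup E] [InnerProductSpace ℝ E] [CompleteSpace E]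
  {f : E → ℝ} {x : E}

theorem contDiffAt_gradient {k n : WithTop ℕ∞} (hf : ContDiffAt ℝ n f x) (hkn : k + 1 ≤ n) :
    ContDiffAt ℝ k (∇ f) x := by
  -- over `ℝ`, the conjugate-linear equivalence `toDual` is linear by unfolding
  let T : StrongDual ℝ E ≃ₗᵢ[ℝ] E := (toDual ℝ E).symm
  exact T.contDiff.contDiffAt.comp x (hf.fderiv_right hkn)

theorem analyticAt_gradient (hf : AnalyticAt ℝ f x) : AnalyticAt ℝ (∇ f) x :=
  (contDiffAt_gradient hf.contDiffAt (le_refl (⊤ + 1))).analyticAt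

theorem inner_fderiv_gradient (f : E → ℝ) (x u v : E) :
    ⟪fderiv ℝ (∇ f) x u, v⟫ = fderiv ℝ (fderiv ℝ f) x u v := by
  let T : StrongDual ℝ E ≃ₗᵢ[ℝ] E := (toDual ℝ E).symm
  have h : fderiv ℝ (∇ f) x u = T (fderiv ℝ (fderiv ℝ f) x u) :=
    DFunLike.congr_fun T.comp_fderiv u
  rw [h]
  exact toDual_symm_apply

theorem inner_fderiv_gradient_comm (hf : ContDiffAt ℝ 2 f x) (u v : E) :
    ⟪fderiv ℝ (∇ f) x u, v⟫ = ⟪fderiv ℝ (∇ f) x v, u⟫ := by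
  simp only [inner_fderiv_gradient]
  exact hf.isSymmSndFDerivAt (by simp) u v

theorem hasGradientAt_norm (hx : x ≠ 0) : HasGradientAt (fun y : E => ‖y‖) (normalize x) x := by
  have h := (hasFDerivAt_id x).norm_sq.sqrt (by simpa using hx)
  simp only [id, Real.sqrt_sq (norm_nonneg _)] at h
  refine h.congr_fderiv ?_
  ext v
  change 1 / (2 * ‖x‖) * 2 • ⟪x, v⟫ = ⟪‖x‖⁻¹ • x, v⟫
  rw [real_inner_smul_left, two_nsmul]
  ring

theorem hasGradientAt_norm_gradient (hf : ContDiffAt ℝ 2 f x) (hx : ∇ f x ≠ 0) :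
    HasGradientAt (fun y => ‖∇ f y‖) (fderiv ℝ (∇ f) x (normalize (∇ f x))) x := by
  have hd : DifferentiableAt ℝ (∇ f) x :=
    (contDiffAt_gradient (k := 1) hf (by norm_num)).differentiableAt one_ne_zero
  refine ((hasGradientAt_norm hx).hasFDerivAt.comp x hd.hasFDerivAt).congr_fderiv ?_
  ext v
  simp [real_inner_comm, ← inner_fderiv_gradient_comm hf v]

theorem norm_smul_gradient_norm_rpow_mul_norm_gradient (hf : ContDiffAt ℝ 2 f x) (hx : x ≠ 0)
    (hfx : ∇ f x ≠ 0) (p : ℝ) :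
    ‖x‖ • ∇ (fun y => ‖y‖ ^ p * ‖∇ f y‖) x =
      (p * (‖x‖ ^ p * ‖∇ f x‖)) • normalize x +
        ‖x‖ ^ (p + 1) • fderiv ℝ (∇ f) x (normalize (∇ f x)) := by
  have hr : ‖x‖ ≠ 0 := norm_ne_zero_iff.2 hx
  have hgrad : HasGradientAt (fun y => ‖y‖ ^ p * ‖∇ f y‖)
      (‖x‖ ^ p • fderiv ℝ (∇ f) x (normalize (∇ f x)) +
        (‖∇ f x‖ * (p * ‖x‖ ^ (p - 1))) • normalize x) x := by
    refine (((hasGradientAt_norm hx).hasFDerivAt.rpow_const (Or.inl hr)).mul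
      (hasGradientAt_norm_gradient hf hfx).hasFDerivAt).congr_fderiv ?_
    simp [smul_smul]
  rw [hgrad.gradient, smul_add, smul_smul, smul_smul, Real.rpow_add_one hr,
    Real.rpow_sub_one hr, add_comm]
  congr 2 <;> field_simp

end Gradient

section NonOscillation

variable {E F : Type*} [NormedAddCommGroup E] [NormedSpace ℝ E] [NormedAddCommGroup F]
  [InnerProductSpace ℝ F]

theorem analyticAt_inner {X Y : E → F} {x : E} (hX : AnalyticAt ℝ X x) (hY : AnalyticAt ℝ Y x) :
    AnalyticAt ℝ (fun y => ⟪X y, Y y⟫) x :=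
  ((innerSL ℝ : F →L[ℝ] F →L[ℝ] ℝ).analyticAt_bilinear (X x, Y x)).comp₂ hX hY

/-- The curve `γ`, as its parameter increases to `L`, is non-oscillating at the point `x`. -/
def NonOscillating (γ : ℝ → E) (L : ℝ) (x : E) : Prop :=
  ∀ g : E → ℝ, AnalyticAt ℝ g x →
    (∀ᶠ s in 𝓝[<] L, g (γ s) = 0) ∨ ∀ᶠ s in 𝓝[<] L, g (γ s) ≠ 0

namespace NonOscillating

variable {γ : ℝ → E} {L : ℝ} {x : E} {A B : E → ℝ}

theorem eventually_nonpos_or_nonneg (hosc : NonOscillating γ L x)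
    (hcont : ∀ᶠ s in 𝓝[<] L, ContinuousAt γ s) (hlim : Tendsto γ (𝓝[<] L) (𝓝 x))
    (hA : AnalyticAt ℝ A x) :
    (∀ᶠ s in 𝓝[<] L, A (γ s) ≤ 0) ∨ ∀ᶠ s in 𝓝[<] L, 0 ≤ A (γ s) := by
  rcases hosc A hA with hzero | hne
  · exact Or.inl (hzero.mono fun _ => le_of_eq)
  have hcontA : ∀ᶠ s in 𝓝[<] L, ContinuousAt A (γ s) :=
    hlim.eventually (hA.eventually_analyticAt.mono fun _ h => h.continuousAt)
  obtain ⟨a, haL, ha⟩ := mem_nhdsLT_iff_exists_Ioo_subset.1 ((hcont.and hcontA).and hne)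
  have hcontOn : ContinuousOn (fun s => A (γ s)) (Ioo a L) := fun s hs =>
    ((ha hs).1.2.comp (ha hs).1.1).continuousWithinAt
  by_contra! ⟨hpos, hneg⟩
  obtain ⟨s, hs_pos, hs⟩ := (hpos.and_eventually (Ioo_mem_nhdsLT haL)).exists
  obtain ⟨t, ht_neg, ht⟩ := (hneg.and_eventually (Ioo_mem_nhdsLT haL)).exists
  obtain ⟨z, hz, hz0⟩ :=
    isPreconnected_Ioo.intermediate_value ht hs hcontOn ⟨ht_neg.le, hs_pos.le⟩
  exact (ha hz).2 hz0

theorem crossesNoLevel_div (hosc : NonOscillating γ L x)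
    (hcont : ∀ᶠ s in 𝓝[<] L, ContinuousAt γ s) (hlim : Tendsto γ (𝓝[<] L) (𝓝 x))
    (hA : AnalyticAt ℝ A x) (hB : AnalyticAt ℝ B x) (hpos : ∀ᶠ s in 𝓝[<] L, 0 < B (γ s)) :
    CrossesNoLevel (fun s => A (γ s) / B (γ s)) (𝓝[<] L) := fun c => by
  refine (hosc.eventually_nonpos_or_nonneg hcont hlim
    (hA.sub (analyticAt_const (v := c).mul hB))).imp (fun h => ?_) fun h => ?_
  all_goals filter_upwards [h, hpos] with s hs hBs
  · exact (div_le_iff₀ hBs).2 (sub_nonpos.1 hs)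
  · exact (le_div_iff₀ hBs).2 (sub_nonneg.1 hs)

theorem exists_tendsto_normalize [FiniteDimensional ℝ F] {X : E → F} (hosc : NonOscillating γ L x)
    (hcont : ∀ᶠ s in 𝓝[<] L, ContinuousAt γ s) (hlim : Tendsto γ (𝓝[<] L) (𝓝 x))
    (hX : AnalyticAt ℝ X x) (hne : ∀ᶠ s in 𝓝[<] L, X (γ s) ≠ 0) :
    ∃ e, ‖e‖ = 1 ∧ Tendsto (fun s => normalize (X (γ s))) (𝓝[<] L) (𝓝 e) := by
  have hnorm : ∀ᶠ s in 𝓝[<] L, ‖normalize (X (γ s))‖ = 1 :=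
    hne.mono fun s => norm_normalize_eq_one_iff.2
  obtain ⟨e, he⟩ : ∃ e, Tendsto (fun s => normalize (X (γ s))) (𝓝[<] L) (𝓝 e) := by
    refine exists_tendsto_of_forall_exists_tendsto_inner fun v => ?_
    have hvX := analyticAt_inner (analyticAt_const (v := v)) hX
    have hsq (s : ℝ) : ⟪v, normalize (X (γ s))⟫ ^ 2 =
        ⟪v, X (γ s)⟫ ^ 2 / ⟪X (γ s), X (γ s)⟫ := by
      rw [NormedSpace.normalize, real_inner_smul_right, real_inner_self_eq_norm_sq, mul_pow,
        inv_pow, inv_mul_eq_div]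
    have hle : ∀ᶠ s in 𝓝[<] L, ⟪v, normalize (X (γ s))⟫ ^ 2 ≤ ‖v‖ ^ 2 := by
      filter_upwards [hnorm] with s hs
      have h := abs_real_inner_le_norm v (normalize (X (γ s)))
      rw [hs, mul_one] at h
      exact sq_le_sq.2 (h.trans_eq (abs_norm v).symm)
    have hcross := hosc.crossesNoLevel_div hcont hlim (hvX.pow 2) (analyticAt_inner hX hX)
      (hne.mono fun s => real_inner_self_pos.2)
    simp only [Pi.pow_apply, ← hsq] at hcross
    obtain ⟨T, hT⟩ := hcross.exists_tendsto (isBoundedUnder_of_eventually_le hle)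
      (isBoundedUnder_of ⟨0, fun s => sq_nonneg _⟩)
    refine exists_tendsto_of_tendsto_sq ?_ hT
    refine (hosc.eventually_nonpos_or_nonneg hcont hlim hvX).imp (fun h => ?_) fun h => ?_
    all_goals
      refine h.mono fun s hs => ?_
      rw [NormedSpace.normalize, real_inner_smul_right]
    · exact mul_nonpos_of_nonneg_of_nonpos (by positivity) hs
    · exact mul_nonneg (by positivity) hs
  exact ⟨e, tendsto_nhds_unique (he.norm.congr' hnorm) tendsto_const_nhds, he⟩

end NonOscillating

end NonOscillation

section Tangent

variable {E : Type*} [NormedAddCommGroup E] [NormedSpace ℝ E] {γ : ℝ → E} {L : ℝ} {e : E}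

theorem isEquivalent_norm_of_tendsto_slope (he : e ≠ 0)
    (hγ : Tendsto (fun s => (s - L)⁻¹ • γ s) (𝓝[<] L) (𝓝 e)) :
    (fun s => ‖γ s‖) ~[𝓝[<] L] fun s => ‖e‖ * (L - s) := by
  refine isEquivalent_of_tendsto_one ?_
  have h := hγ.norm.div_const ‖e‖
  rw [div_self (norm_ne_zero_iff.2 he)] at h
  refine h.congr' ?_
  filter_upwards [self_mem_nhdsWithin] with s hs
  rw [Pi.div_apply, norm_smul, norm_inv, Real.norm_eq_abs, abs_of_neg (sub_neg.2 hs), neg_sub,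
    inv_mul_eq_div, div_div, mul_comm]

theorem tendsto_normalize_of_tendsto_slope (he : e ≠ 0)
    (hγ : Tendsto (fun s => (s - L)⁻¹ • γ s) (𝓝[<] L) (𝓝 e)) :
    Tendsto (fun s => normalize (γ s)) (𝓝[<] L) (𝓝 (-normalize e)) := by
  have h : Tendsto (fun s => normalize ((s - L)⁻¹ • γ s)) (𝓝[<] L)
      (𝓝 (normalize e)) := (hγ.norm.inv₀ (norm_ne_zero_iff.2 he)).smul hγ
  refine h.neg.congr' ?_
  filter_upwards [self_mem_nhdsWithin] with s hs
  rw [normalize_smul_of_neg (inv_lt_zero.2 (sub_neg.2 hs)), neg_neg]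

end Tangent

section Radial

variable {ι E : Type*} [NormedAddCommGroup E] [InnerProductSpace ℝ E] {l : Filter ι}

theorem tendsto_rpow_mul_norm_of_tendsto_normalize {G y : ι → E} {e : E} {c q : ℝ} (he : ‖e‖ = 1)
    (hG : Tendsto (fun i => normalize (G i)) l (𝓝 e))
    (hy : Tendsto (fun i => normalize (y i)) l (𝓝 (-e)))
    (hrad : (fun i => ⟪G i, normalize (y i)⟫ + c * ‖y i‖ ^ q) =o[l]
      fun i => ‖y i‖ ^ q) :
    Tendsto (fun i => ‖y i‖ ^ (-q) * ‖G i‖) l (𝓝 c) := by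
  have hy0 : ∀ᶠ i in l, 0 < ‖y i‖ := by
    have he0 : e ≠ 0 := norm_ne_zero_iff.1 (he ▸ one_ne_zero)
    exact (hy.eventually_ne (neg_ne_zero.2 he0)).mono fun i hi =>
      norm_pos_iff.2 ((normalize_eq_zero_iff _).not.1 hi)
  have hangle : Tendsto (fun i => ⟪normalize (G i), normalize (y i)⟫) l
      (𝓝 (-1)) := by
    simpa [inner_neg_right, real_inner_self_eq_norm_sq, he] using hG.inner (𝕜 := ℝ) hy
  have hradial : Tendsto (fun i => ‖y i‖ ^ (-q) * ⟪G i, normalize (y i)⟫) l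
      (𝓝 (-c)) := by
    have h := hrad.tendsto_div_nhds_zero.sub_const c
    rw [zero_sub] at h
    refine h.congr' (hy0.mono fun i hi => ?_)
    rw [add_div, mul_div_cancel_right₀ _ (Real.rpow_pos_of_pos hi q).ne', add_sub_cancel_right,
      div_eq_inv_mul, ← Real.rpow_neg hi.le]
  have h := hradial.div hangle (by norm_num)
  rw [div_neg, div_one, neg_neg] at h
  refine h.congr' ((hangle.eventually_ne (by norm_num : (-1 : ℝ) ≠ 0)).mono fun i hi => ?_)
  have hGi : ⟪G i, normalize (y i)⟫ =
      ‖G i‖ * ⟪normalize (G i), normalize (y i)⟫ := by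
    rw [← real_inner_smul_left, norm_smul_normalize]
  rw [Pi.div_apply, hGi, ← mul_assoc, mul_div_cancel_right₀ _ hi]

theorem tendsto_rpow_smul_iff_of_isEquivalent {F : Type*} [NormedAddCommGroup F] [NormedSpace ℝ F]
    {u v : ι → ℝ} {h : ι → F} {w : F} (huv : u ~[l] v) (hv : ∀ i, 0 ≤ v i) (p : ℝ) :
    Tendsto (fun i => u i ^ p • h i) l (𝓝 w) ↔ Tendsto (fun i => v i ^ p • h i) l (𝓝 w) :=
  ((huv.rpow hv).smul IsEquivalent.refl).tendsto_nhds_iff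

end Radial

section Trajectory

variable {E : Type*} [NormedAddCommGroup E] [InnerProductSpace ℝ E]

section CompleteSpace

variable [CompleteSpace E]

/-- Near its end `L`, the curve `γ` is a trajectory of the unit gradient field of `f`, and it
converges to the origin. -/
structure IsUnitGradientTrajectory (f : E → ℝ) (γ : ℝ → E) (L : ℝ) : Prop where
  tendsto_zero : Tendsto γ (𝓝[<] L) (𝓝 0)
  gradient_ne_zero : ∀ᶠ s in 𝓝[<] L, ∇ f (γ s) ≠ 0
  hasDerivAt : ∀ᶠ s in 𝓝[<] L, HasDerivAt γ (normalize (∇ f (γ s))) s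

namespace IsUnitGradientTrajectory

variable {f : E → ℝ} {γ : ℝ → E} {L m c : ℝ} {e : E}

theorem eventually_continuousAt (hγ : IsUnitGradientTrajectory f γ L) :
    ∀ᶠ s in 𝓝[<] L, ContinuousAt γ s :=
  hγ.hasDerivAt.mono fun _ h => h.continuousAt

theorem eventually_contDiffAt {n : WithTop ℕ∞} (hγ : IsUnitGradientTrajectory f γ L)
    (hf : AnalyticAt ℝ f 0) :
    ∀ᶠ s in 𝓝[<] L, ContDiffAt ℝ n f (γ s) :=
  hγ.tendsto_zero.eventually (hf.eventually_analyticAt.mono fun _ h => h.contDiffAt)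

theorem tendsto_slope (hγ : IsUnitGradientTrajectory f γ L)
    (hν : Tendsto (fun s => normalize (∇ f (γ s))) (𝓝[<] L) (𝓝 e)) :
    Tendsto (fun s => (s - L)⁻¹ • γ s) (𝓝[<] L) (𝓝 e) := by
  simpa only [sub_zero] using tendsto_slope_of_tendsto_deriv hγ.tendsto_zero hγ.hasDerivAt hν

theorem hasDerivAt_inner_gradient (hγ : IsUnitGradientTrajectory f γ L)
    (hf : AnalyticAt ℝ f 0) (v : E) :
    ∀ᶠ s in 𝓝[<] L, HasDerivAt (fun s => ⟪v, ∇ f (γ s)⟫)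
      ⟪v, fderiv ℝ (∇ f) (γ s) (normalize (∇ f (γ s)))⟫ s := by
  filter_upwards [hγ.hasDerivAt, hγ.eventually_contDiffAt hf] with s hγs hfs
  have hd : DifferentiableAt ℝ (∇ f) (γ s) :=
    (contDiffAt_gradient hfs one_add_one_eq_two.le).differentiableAt one_ne_zero
  exact (innerSL ℝ v).hasFDerivAt.comp_hasDerivAt s (hd.hasFDerivAt.comp_hasDerivAt s hγs)

/-- Up to a convergent factor, the quantity at hand is `⟪x, e⟫ * ⟪v, D(∇f)(∇f)⟫ / ‖∇f‖²`, a quotient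
of analytic functions. -/
theorem exists_tendsto_ereal_rpow_mul_inner_fderiv_gradient
    (hγ : IsUnitGradientTrajectory f γ L) (hf : AnalyticAt ℝ f 0) (hosc : NonOscillating γ L 0)
    (hc : c ≠ 0) (he : ‖e‖ = 1) (hγe : Tendsto (fun s => (s - L)⁻¹ • γ s) (𝓝[<] L) (𝓝 e))
    (hG : Tendsto (fun s => (L - s) ^ (1 - m) * ‖∇ f (γ s)‖) (𝓝[<] L) (𝓝 c)) (v : E) :
    ∃ T : EReal, Tendsto (fun s => (((L - s) ^ (2 - m) *
      ⟪v, fderiv ℝ (∇ f) (γ s) (normalize (∇ f (γ s)))⟫ : ℝ) : EReal)) (𝓝[<] L) (𝓝 T) := by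
  have hGan := analyticAt_gradient hf
  have hDG : AnalyticAt ℝ (fun x => fderiv ℝ (∇ f) x (∇ f x)) 0 :=
    (hGan.fderiv.contDiffAt.clm_apply hGan.contDiffAt (n := ⊤)).analyticAt
  let A : E → ℝ := fun x => ⟪x, e⟫ * ⟪v, fderiv ℝ (∇ f) x (∇ f x)⟫
  have hA : AnalyticAt ℝ A 0 := (analyticAt_inner analyticAt_id analyticAt_const).mul
    (analyticAt_inner analyticAt_const hDG)
  obtain ⟨T, hT⟩ := (hosc.crossesNoLevel_div hγ.eventually_continuousAt hγ.tendsto_zero hA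
    (analyticAt_inner hGan hGan)
    (hγ.gradient_ne_zero.mono fun s => real_inner_self_pos.2)).exists_tendsto_ereal
  have hangle : Tendsto (fun s => ⟪(s - L)⁻¹ • γ s, e⟫) (𝓝[<] L) (𝓝 1) := by
    simpa [real_inner_self_eq_norm_sq, he] using hγe.inner (𝕜 := ℝ) (tendsto_const_nhds (x := e))
  have hfactor : Tendsto
      (fun s => -((L - s) ^ (1 - m) * ‖∇ f (γ s)‖ * ⟪(s - L)⁻¹ • γ s, e⟫⁻¹)) (𝓝[<] L) (𝓝 (-c)) := by
    simpa using (hG.mul (hangle.inv₀ one_ne_zero)).neg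
  have hc' : ((-c : ℝ) : EReal) ≠ 0 := by simpa using hc
  refine ⟨_, (EReal.Tendsto.mul (EReal.tendsto_coe.2 hfactor) hT (.inl hc') (.inl hc')
    (.inl (EReal.coe_ne_bot _)) (.inl (EReal.coe_ne_top _))).congr' ?_⟩
  filter_upwards [hγ.gradient_ne_zero, self_mem_nhdsWithin, hangle.eventually_ne one_ne_zero]
    with s hs hsL hse
  have hr : ‖∇ f (γ s)‖ ≠ 0 := norm_ne_zero_iff.2 hs
  have ht : L - s ≠ 0 := (sub_pos.2 hsL).ne'
  rw [real_inner_smul_left] at hse ⊢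
  rw [← EReal.coe_mul, EReal.coe_eq_coe_iff, NormedSpace.normalize, map_smul, real_inner_smul_right,
    real_inner_self_eq_norm_sq, show 2 - m = 1 - m + 1 by ring, Real.rpow_add_one ht,
    mul_inv, inv_inv]
  have hγe0 := right_ne_zero_of_mul hse
  simp only [A]
  field_simp
  ring

end IsUnitGradientTrajectory

end CompleteSpace

variable [FiniteDimensional ℝ E] {f : E → ℝ} {γ : ℝ → E} {L m c : ℝ} {e : E}

theorem IsUnitGradientTrajectory.tendsto_rpow_smul_fderiv_gradient
    (hγ : IsUnitGradientTrajectory f γ L) (hf : AnalyticAt ℝ f 0) (hosc : NonOscillating γ L 0)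
    (hm : 1 < m) (hc : c ≠ 0) (he : ‖e‖ = 1)
    (hν : Tendsto (fun s => normalize (∇ f (γ s))) (𝓝[<] L) (𝓝 e))
    (hG : Tendsto (fun s => (L - s) ^ (1 - m) * ‖∇ f (γ s)‖) (𝓝[<] L) (𝓝 c)) :
    Tendsto (fun s => (L - s) ^ (2 - m) • fderiv ℝ (∇ f) (γ s) (normalize (∇ f (γ s))))
      (𝓝[<] L) (𝓝 (-((m - 1) * c) • e)) := by
  refine tendsto_of_forall_tendsto_inner fun v => ?_
  obtain ⟨T, hT⟩ := hγ.exists_tendsto_ereal_rpow_mul_inner_fderiv_gradient hf hosc hc he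
    (hγ.tendsto_slope hν) hG v
  have hdiv : Tendsto (fun s => ⟪v, ∇ f (γ s)⟫ / (L - s) ^ (m - 1)) (𝓝[<] L)
      (𝓝 (c * ⟪v, e⟫)) := by
    refine (hG.mul ((tendsto_const_nhds (x := v)).inner hν)).congr' ?_
    filter_upwards [self_mem_nhdsWithin] with s hs
    rw [mul_assoc, ← real_inner_smul_right, norm_smul_normalize, ← neg_sub m 1,
      Real.rpow_neg (sub_nonneg.2 hs.le), inv_mul_eq_div]
  have hexp : 2 - m = 1 - (m - 1) := by ring
  simp only [hexp] at hT ⊢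
  have h := tendsto_rpow_mul_deriv_of_tendsto_div_rpow (sub_pos.2 hm)
    (hγ.hasDerivAt_inner_gradient hf v) hdiv hT
  simpa only [real_inner_smul_right, neg_mul, mul_assoc] using h

theorem m_beta_is_asymptotic_critical_value_general (hf : AnalyticAt ℝ f 0)
    (hγ : IsUnitGradientTrajectory f γ L) (hosc : NonOscillating γ L 0) (hm : 1 < m) (hc : c ≠ 0)
    (hrad : (fun s => ⟪∇ f (γ s), normalize (γ s)⟫ + c * ‖γ s‖ ^ (m - 1))
      =o[𝓝[<] L] fun s => ‖γ s‖ ^ (m - 1)) :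
    Tendsto (fun s => ‖γ s‖ ^ (1 - m) * ‖∇ f (γ s)‖) (𝓝[<] L) (𝓝 c) ∧
    Tendsto (fun s => ‖γ s‖ * ‖∇ (fun x => ‖x‖ ^ (1 - m) * ‖∇ f x‖) (γ s)‖) (𝓝[<] L) (𝓝 0) := by
  obtain ⟨e, he, hν⟩ := hosc.exists_tendsto_normalize hγ.eventually_continuousAt hγ.tendsto_zero
    (analyticAt_gradient hf) hγ.gradient_ne_zero
  have he0 : e ≠ 0 := norm_ne_zero_iff.1 (he ▸ one_ne_zero)
  have hslope := hγ.tendsto_slope hν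
  have hdir : Tendsto (fun s => normalize (γ s)) (𝓝[<] L) (𝓝 (-e)) := by
    simpa only [normalize_eq_self_of_norm_eq_one he] using
      tendsto_normalize_of_tendsto_slope he0 hslope
  have hdist : (fun s => L - s) ~[𝓝[<] L] fun s => ‖γ s‖ := by
    simpa only [he, one_mul] using (isEquivalent_norm_of_tendsto_slope he0 hslope).symm
  have hG : Tendsto (fun s => ‖γ s‖ ^ (1 - m) * ‖∇ f (γ s)‖) (𝓝[<] L) (𝓝 c) := by
    simpa only [neg_sub] using tendsto_rpow_mul_norm_of_tendsto_normalize he hν hdir hrad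
  refine ⟨hG, ?_⟩
  have hDG := (tendsto_rpow_smul_iff_of_isEquivalent hdist (fun s => norm_nonneg _) _).1 <|
    hγ.tendsto_rpow_smul_fderiv_gradient hf hosc hm hc he hν <|
      (tendsto_rpow_smul_iff_of_isEquivalent hdist (fun s => norm_nonneg _) _).2 hG
  have hγ0 : ∀ᶠ s in 𝓝[<] L, γ s ≠ 0 :=
    (hdir.eventually_ne (neg_ne_zero.2 he0)).mono fun s => (normalize_eq_zero_iff _).not.1
  have hsum := (((hG.const_mul (1 - m)).smul hdir).add hDG).norm
  rw [show ((1 - m) * c) • -e + -((m - 1) * c) • e = 0 by module, norm_zero] at hsum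
  refine hsum.congr' ?_
  filter_upwards [hγ0, hγ.gradient_ne_zero, hγ.eventually_contDiffAt hf] with s hs hGs hfs
  rw [show 2 - m = 1 - m + 1 by ring, ← norm_smul_gradient_norm_rpow_mul_norm_gradient hfs hs hGs,
    norm_smul, norm_norm]

end Trajectory

/-- `m·β` is an asymptotic critical value of `g(x) = |x|^{1-m}|∇f(x)|`
witnessed along the non-oscillating trajectory. -/
theorem m_beta_is_asymptotic_critical_value
    {n : ℕ} (hn : 2 ≤ n)
    (U : Set (EuclideanSpace ℝ (Fin n))) (hUopen : IsOpen U)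
    (hOU : (0 : EuclideanSpace ℝ (Fin n)) ∈ U)
    (f : EuclideanSpace ℝ (Fin n) → ℝ)
    (hfan : AnalyticOnNhd ℝ f U) (hf0 : f 0 = 0) (hgf0 : gradient f 0 = 0)
    (L : ℝ) (hL : 0 < L)
    (γ : ℝ → EuclideanSpace ℝ (Fin n))
    (hγU : ∀ s ∈ Set.Ico (0 : ℝ) L, γ s ∈ U)
    (hγreg : ∀ s ∈ Set.Ico (0 : ℝ) L, gradient f (γ s) ≠ 0)
    (hγode : ∀ s ∈ Set.Ico (0 : ℝ) L,
      HasDerivAt γ (‖gradient f (γ s)‖⁻¹ • gradient f (γ s)) s)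
    (hfneg : f (γ 0) < 0)
    (hfmono : StrictMonoOn (fun s => f (γ s)) (Set.Ico (0 : ℝ) L))
    (hγlim : Tendsto γ (𝓝[<] L) (𝓝 0))
    (hosc : ∀ g : EuclideanSpace ℝ (Fin n) → ℝ, AnalyticAt ℝ g 0 →
      (∀ᶠ s in 𝓝[<] L, g (γ s) = 0) ∨ (∀ᶠ s in 𝓝[<] L, g (γ s) ≠ 0))
    (m : ℝ) (hm : 1 < m) (hmQ : ∃ q : ℚ, m = (q : ℝ)) (β : ℝ) (hβ : 0 < β)
    (hKMP1 : (fun s => f (γ s) + β * ‖γ s‖ ^ m) =o[𝓝[<] L] fun s => ‖γ s‖ ^ m)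
    (hKMP2 : (fun s => ⟪gradient f (γ s), ‖γ s‖⁻¹ • γ s⟫ + m * β * ‖γ s‖ ^ (m - 1))
      =o[𝓝[<] L] fun s => ‖γ s‖ ^ (m - 1))
    :
    Tendsto (fun s => ‖γ s‖ ^ ((1 : ℝ) - m) * ‖gradient f (γ s)‖) (𝓝[<] L) (𝓝 (m * β)) ∧
    Tendsto (fun s =>
        ‖γ s‖ * ‖gradient (fun x => ‖x‖ ^ ((1 : ℝ) - m) * ‖gradient f x‖) (γ s)‖)
      (𝓝[<] L) (𝓝 0) := by
  have hf : AnalyticAt ℝ f 0 := hfan 0 hOU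
  have hleft : ∀ᶠ s in 𝓝[<] L, s ∈ Ico 0 L := Ico_mem_nhdsLT hL
  have hγ : IsUnitGradientTrajectory f γ L :=
    ⟨hγlim, hleft.mono hγreg, hleft.mono hγode⟩
  exact m_beta_is_asymptotic_critical_value_general hf hγ hosc hm (by positivity) hKMP2
end

section
/- If γ is non-oscillating at infinity, then: (1) Hs(f)(x) ≠ 0 for x on γ with |x| large enough, and the normalized Hessian Hs(f)(x)/‖Hs(f)(x)‖ converges, as |x| → ∞ along γ, to a nonzero self-adjoint operator 𝓗 with ‖𝓗‖ = 1; (2) the limit of secants ν is an eigen-vector of 𝓗: there exists λ ∈ ℝ with 𝓗·ν = λ·ν. -/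
/-!
Non-oscillation and the intermediate value theorem give every polynomial an eventual sign along
`γ`, hence polynomials are totally preordered along `γ` and quotients of polynomials have limits.
Dividing a polynomial map by its dominant coordinate, one sees that it converges in direction; this
applies to `∇f`, whose direction is `γ'`, so that `γ'` tends to the limit of secants `ν`, and to
the Hessian, which cannot vanish eventually along `γ` because `∇f` would then be constant, whereas
`∇f → 0` since `f` is bounded above along `γ`.

For the eigenvector, let `w = 𝓗 ν`, the limit of the rescaled derivative of `∇f ∘ γ`. If
`⟪w, v⟫ > 0` then `⟪∇f ∘ γ, v⟫` eventually increases to `0`, so it is negative and `⟪ν, v⟫ ≤ 0`.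
Taking `v = w + ‖w‖ • ν` forces `v = 0`.
-/

open scoped RealInnerProductSpace Topology
open Filter

section EventualSigns

variable {α : Type*} {l : Filter α} {𝒜 : Subalgebra ℝ (α → ℝ)} {f g : α → ℝ}

/-- Every function of the algebra `𝒜` has an eventual sign along the filter `l`. Only one
alternative is required, since it is also available for `-g`. -/
def HasEventualSigns (𝒜 : Subalgebra ℝ (α → ℝ)) (l : Filter α) : Prop :=
  ∀ g ∈ 𝒜, (∀ᶠ x in l, g x ≤ 0) ∨ ∀ᶠ x in l, 0 < g x

/-- A vector-valued function belongs weakly to `𝒜` if its composition with each continuous linear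
functional is in `𝒜`; in finite dimension, if its coordinates are in `𝒜`. -/
def WeakMem {F : Type*} [NormedAddCommGroup F] [NormedSpace ℝ F] (𝒜 : Subalgebra ℝ (α → ℝ))
    (G : α → F) : Prop :=
  ∀ φ : F →L[ℝ] ℝ, (fun x => φ (G x)) ∈ 𝒜

namespace HasEventualSigns

theorem eventually_le_or_lt (h : HasEventualSigns 𝒜 l) (hf : f ∈ 𝒜) (hg : g ∈ 𝒜) :
    (∀ᶠ x in l, f x ≤ g x) ∨ ∀ᶠ x in l, g x < f x :=
  (h _ (sub_mem hf hg)).imp (fun hle => hle.mono fun _ => sub_nonpos.1)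
    fun hlt => hlt.mono fun _ => sub_pos.1

theorem exists_mem_eventuallyEq_abs (h : HasEventualSigns 𝒜 l) (hg : g ∈ 𝒜) :
    ∃ a ∈ 𝒜, ∀ᶠ x in l, a x = |g x| := by
  rcases h g hg with hle | hlt
  · exact ⟨-g, neg_mem hg, hle.mono fun _ hx => (abs_of_nonpos hx).symm⟩
  · exact ⟨g, hg, hlt.mono fun _ hx => (abs_of_pos hx).symm⟩

theorem eventually_abs_le_total (h : HasEventualSigns 𝒜 l) (hf : f ∈ 𝒜) (hg : g ∈ 𝒜) :
    (∀ᶠ x in l, |f x| ≤ |g x|) ∨ ∀ᶠ x in l, |g x| ≤ |f x| := by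
  obtain ⟨a, ha, haf⟩ := h.exists_mem_eventuallyEq_abs hf
  obtain ⟨b, hb, hbg⟩ := h.exists_mem_eventuallyEq_abs hg
  refine (h.eventually_le_or_lt ha hb).imp (fun hle => ?_) fun hlt => ?_
  · filter_upwards [hle, haf, hbg] with x hx hax hbx
    rwa [← hax, ← hbx]
  · filter_upwards [hlt, haf, hbg] with x hx hax hbx
    rw [← hax, ← hbx]
    exact hx.le

theorem exists_eventually_abs_le (h : HasEventualSigns 𝒜 l) {ι : Type*} [Finite ι] [Nonempty ι]
    {c : ι → α → ℝ} (hc : ∀ i, c i ∈ 𝒜) : ∃ i₀, ∀ i, ∀ᶠ x in l, |c i x| ≤ |c i₀ x| := by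
  let r : ι → ι → Prop := fun i j => ∀ᶠ x in l, |c i x| ≤ |c j x|
  have : IsTrans ι r := ⟨fun _ _ _ hij hjk => by
    filter_upwards [hij, hjk] with x using le_trans⟩
  have hr : Directed r id := fun i j => by
    rcases h.eventually_abs_le_total (hc i) (hc j) with hij | hji
    · exact ⟨j, hij, .of_forall fun _ => le_rfl⟩
    · exact ⟨i, .of_forall fun _ => le_rfl, hji⟩
  exact hr.finite_le id

theorem exists_tendsto_div_abs (h : HasEventualSigns 𝒜 l) (hf : f ∈ 𝒜) (hg : g ∈ 𝒜)
    (hg0 : ∀ᶠ x in l, g x ≠ 0) (hfg : ∀ᶠ x in l, |f x| ≤ |g x|) :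
    ∃ c, Tendsto (fun x => f x / |g x|) l (𝓝 c) := by
  have hbdd : ∀ᶠ x in l, |f x / (|g x|)| ≤ 1 := by
    filter_upwards [hfg] with x hx
    rw [abs_div, abs_abs]
    exact div_le_one_of_le₀ hx (abs_nonneg _)
  obtain ⟨a, ha, hag⟩ := h.exists_mem_eventuallyEq_abs hg
  refine tendsto_of_no_upcrossings dense_univ ?_ ⟨1, hbdd.mono fun _ hx => (abs_le.1 hx).2⟩
    ⟨-1, hbdd.mono fun _ hx => (abs_le.1 hx).1⟩
  rintro p - q - hpq ⟨hlt, hgt⟩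
  rcases h.eventually_le_or_lt hf (Subalgebra.smul_mem 𝒜 ha p) with hle | hlt'
  · refine hgt ?_
    filter_upwards [hle, hag, hg0] with x hx hax hgx
    rw [not_lt, div_le_iff₀ (abs_pos.2 hgx), ← hax]
    have : 0 ≤ a x := hax ▸ abs_nonneg (g x)
    exact hx.trans (mul_le_mul_of_nonneg_right hpq.le this)
  · refine hlt ?_
    filter_upwards [hlt', hag, hg0] with x hx hax hgx
    rw [not_lt, le_div_iff₀ (abs_pos.2 hgx), ← hax]
    exact hx.le

end HasEventualSigns

end EventualSigns

section Normalize

variable {α : Type*} {l : Filter α} {F : Type*} [NormedAddCommGroup F] [NormedSpace ℝ F]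

theorem tendsto_norm_inv_smul {m : α → ℝ} {T : α → F} {M : F} (hm : ∀ᶠ x in l, 0 < m x)
    (hM : M ≠ 0) (hT : Tendsto (fun x => (m x)⁻¹ • T x) l (𝓝 M)) :
    Tendsto (fun x => ‖T x‖⁻¹ • T x) l (𝓝 (‖M‖⁻¹ • M)) := by
  refine ((hT.norm.inv₀ (norm_ne_zero_iff.2 hM)).smul hT).congr' ?_
  filter_upwards [hm] with x hx
  rw [norm_smul, smul_smul, norm_inv, Real.norm_of_nonneg hx.le, mul_inv_rev, inv_inv,
    mul_assoc, mul_inv_cancel₀ hx.ne', mul_one]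

variable [FiniteDimensional ℝ F] {𝒜 : Subalgebra ℝ (α → ℝ)} {T : α → F}

/- The largest coordinate of `T` in a basis serves as the normalizing factor: the limit of the
rescaled map is nonzero because its corresponding coordinate has absolute value one. -/
theorem HasEventualSigns.exists_tendsto_inv_smul (h : HasEventualSigns 𝒜 l) (hT : WeakMem 𝒜 T)
    (hne : ¬∀ᶠ x in l, T x = 0) :
    ∃ m : α → ℝ, (∀ᶠ x in l, 0 < m x) ∧
      ∃ M : F, M ≠ 0 ∧ Tendsto (fun x => (m x)⁻¹ • T x) l (𝓝 M) := by
  let b := Module.finBasis ℝ F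
  have hmem (i) : (fun x => b.repr (T x) i) ∈ 𝒜 := hT (b.coord i).toContinuousLinearMap
  have : l.NeBot := ⟨fun hl => hne (by simp [hl])⟩
  have : Nontrivial F := by
    by_contra hF
    rw [not_nontrivial_iff_subsingleton] at hF
    exact hne (.of_forall fun x => Subsingleton.elim _ _)
  have : Nonempty (Fin (Module.finrank ℝ F)) := b.index_nonempty
  obtain ⟨i₀, hmax⟩ := h.exists_eventually_abs_le hmem
  have hpos : ∀ᶠ x in l, 0 < |b.repr (T x) i₀| := by
    obtain ⟨a, ha, hai⟩ := h.exists_mem_eventuallyEq_abs (hmem i₀)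
    rcases h a ha with hle | hlt
    · refine (hne ?_).elim
      filter_upwards [eventually_all.2 hmax, hle, hai] with x hx hax hai
      refine b.ext_elem fun i => ?_
      simpa using abs_nonpos_iff.1 ((hx i).trans (hai ▸ hax))
    · filter_upwards [hlt, hai] with x hx hai using hai ▸ hx
  choose c hc using fun i =>
    h.exists_tendsto_div_abs (hmem i) (hmem i₀) (hpos.mono fun x => abs_pos.1) (hmax i)
  have hci₀ : |c i₀| = 1 := by
    refine tendsto_nhds_unique (hc i₀).abs (tendsto_const_nhds.congr' ?_)
    filter_upwards [hpos] with x hx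
    rw [abs_div, abs_abs, div_self hx.ne']
  refine ⟨fun x => |b.repr (T x) i₀|, hpos, ∑ i, c i • b i, fun h0 => ?_, ?_⟩
  · have : c i₀ = 0 := by
      rw [← b.repr_sum_self c, h0, map_zero, Finsupp.coe_zero, Pi.zero_apply]
    simp [this] at hci₀
  · refine (tendsto_finsetSum _ fun i _ => (hc i).smul_const (b i)).congr fun x => ?_
    conv_rhs => rw [← b.sum_repr (T x)]
    simp only [Finset.smul_sum, smul_smul, div_eq_inv_mul]

theorem HasEventualSigns.exists_tendsto_norm_inv_smul (h : HasEventualSigns 𝒜 l)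
    (hT : WeakMem 𝒜 T) (hne : ¬∀ᶠ x in l, T x = 0) :
    (∀ᶠ x in l, T x ≠ 0) ∧
      ∃ M : F, ‖M‖ = 1 ∧ Tendsto (fun x => ‖T x‖⁻¹ • T x) l (𝓝 M) := by
  obtain ⟨m, hm, M, hM, hlim⟩ := h.exists_tendsto_inv_smul hT hne
  refine ⟨(hlim.eventually_ne hM).mono fun x => right_ne_zero_of_smul, ‖M‖⁻¹ • M, ?_,
    tendsto_norm_inv_smul hm hM hlim⟩
  rw [norm_smul, norm_inv, norm_norm, inv_mul_cancel₀ (norm_ne_zero_iff.2 hM)]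

end Normalize

section DifferentialAlgebra

variable {E F : Type*} [NormedAddCommGroup E] [NormedAddCommGroup F] [NormedSpace ℝ F]

/-- An algebra of differentiable functions on `E` stable under directional derivatives, such as the
polynomial functions or the globally subanalytic real analytic functions. -/
structure IsDifferentialAlgebra [NormedSpace ℝ E] (𝒜 : Subalgebra ℝ (E → ℝ)) : Prop where
  differentiable : ∀ g ∈ 𝒜, Differentiable ℝ g
  fderiv_apply_mem : ∀ g ∈ 𝒜, ∀ v, (fun x => fderiv ℝ g x v) ∈ 𝒜

namespace IsDifferentialAlgebra

theorem differentiable_of_weakMem [NormedSpace ℝ E] [FiniteDimensional ℝ F]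
    {𝒜 : Subalgebra ℝ (E → ℝ)} (h𝒜 : IsDifferentialAlgebra 𝒜) {G : E → F} (hG : WeakMem 𝒜 G) :
    Differentiable ℝ G := by
  let b := Module.finBasis ℝ F
  have hsum : Differentiable ℝ fun x => ∑ i, b.repr (G x) i • b i :=
    .fun_sum fun i _ =>
      (h𝒜.differentiable _ (hG (b.coord i).toContinuousLinearMap)).smul_const (b i)
  simpa only [b.sum_repr] using hsum

/- With `b` a basis of `E`, the value `φ L` is the sum over `i` of the functionals
`y ↦ φ (b.coord i ⊗ y)` at `L (b i)`. -/
theorem weakMem_fderiv [NormedSpace ℝ E] [FiniteDimensional ℝ E] {𝒜 : Subalgebra ℝ (E → ℝ)}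
    (h𝒜 : IsDifferentialAlgebra 𝒜) {G : E → F} (hG : WeakMem 𝒜 G) (hGd : Differentiable ℝ G) :
    WeakMem 𝒜 (fderiv ℝ G) := by
  intro φ
  let b := Module.finBasis ℝ E
  let ψ (i) : F →L[ℝ] ℝ :=
    φ.comp (ContinuousLinearMap.smulRightL ℝ E F (b.coord i).toContinuousLinearMap)
  have hφ (L : E →L[ℝ] F) : φ L = ∑ i, ψ i (L (b i)) := by
    have hL : L = ∑ i, (b.coord i).toContinuousLinearMap.smulRight (L (b i)) := by
      ext v
      have hv : L v = ∑ i, b.repr v i • L (b i) := by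
        conv_lhs => rw [← b.sum_repr v, map_sum]
        simp only [map_smul]
      simpa using hv
    conv_lhs => rw [hL, map_sum]
    rfl
  have hψ (i) : (fun x => ψ i (fderiv ℝ G x (b i))) ∈ 𝒜 := by
    have hcomp (x) : fderiv ℝ (fun y => ψ i (G y)) x = (ψ i).comp (fderiv ℝ G x) :=
      ((ψ i).hasFDerivAt.comp x (hGd x).hasFDerivAt).fderiv
    simpa [hcomp] using h𝒜.fderiv_apply_mem _ (hG (ψ i)) (b i)
  have hsum : (fun x => φ (fderiv ℝ G x)) = ∑ i, fun x => ψ i (fderiv ℝ G x (b i)) := by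
    ext x
    simp only [hφ, Finset.sum_apply]
  rw [hsum]
  exact sum_mem fun i _ => hψ i

theorem weakMem_gradient [InnerProductSpace ℝ E] [CompleteSpace E] {𝒜 : Subalgebra ℝ (E → ℝ)}
    (h𝒜 : IsDifferentialAlgebra 𝒜) {f : E → ℝ} (hf : f ∈ 𝒜) : WeakMem 𝒜 (gradient f) := by
  intro φ
  have hφ (x) : φ (gradient f x) = fderiv ℝ f x ((InnerProductSpace.toDual ℝ E).symm φ) := by
    rw [← toDual_gradient, InnerProductSpace.toDual_apply_apply, real_inner_comm,
      InnerProductSpace.toDual_symm_apply]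
  simp only [hφ]
  exact h𝒜.fderiv_apply_mem f hf _

end IsDifferentialAlgebra

theorem WeakMem.norm_sq_mem [InnerProductSpace ℝ E] [FiniteDimensional ℝ E] {α : Type*}
    {𝒜 : Subalgebra ℝ (α → ℝ)} {G : α → E} (hG : WeakMem 𝒜 G) : (fun x => ‖G x‖ ^ 2) ∈ 𝒜 := by
  let b := stdOrthonormalBasis ℝ E
  have hsum : (fun x => ‖G x‖ ^ 2) = ∑ i, (fun x => ⟪b i, G x⟫) ^ 2 := by
    ext x
    simp [b.sum_sq_inner_right]
  rw [hsum]
  exact sum_mem fun i _ => pow_mem (hG (innerSL ℝ (b i))) 2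

theorem isSelfAdjoint_fderiv_gradient [InnerProductSpace ℝ E] [CompleteSpace E] {f : E → ℝ}
    (hf : Differentiable ℝ f) {x : E} (hx : DifferentiableAt ℝ (gradient f) x) :
    IsSelfAdjoint (fderiv ℝ (gradient f) x) := by
  rw [ContinuousLinearMap.isSelfAdjoint_iff_isSymmetric]
  intro u v
  let B : E →L[ℝ] E →L[ℝ] ℝ := (isBoundedBilinearMap_inner (𝕜 := ℝ)).toContinuousLinearMap
  have hB : (B.comp (fderiv ℝ (gradient f) x)) u v = (B.comp (fderiv ℝ (gradient f) x)) v u :=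
    second_derivative_symmetric (fun y => (hf y).hasGradientAt.hasFDerivAt)
      (B.hasFDerivAt.comp x hx.hasFDerivAt) u v
  exact hB.trans (real_inner_comm _ _)

end DifferentialAlgebra

section CurvesAtInfinity

variable {E : Type*} [NormedAddCommGroup E]

theorem eventually_pos_or_eventually_neg {h : ℝ → ℝ} (hc : ∀ᶠ s in atTop, ContinuousAt h s)
    (h0 : ∀ᶠ s in atTop, h s ≠ 0) : (∀ᶠ s in atTop, 0 < h s) ∨ ∀ᶠ s in atTop, h s < 0 := by
  obtain ⟨a, ha⟩ := eventually_atTop.1 (hc.and h0)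
  by_contra! hsign
  obtain ⟨s, hs, hsa⟩ := (hsign.1.and_eventually (eventually_ge_atTop a)).exists
  obtain ⟨t, ht, hta⟩ := (hsign.2.and_eventually (eventually_ge_atTop a)).exists
  have hcont : ContinuousOn h (Set.Ici a) := fun r hr => (ha r hr).1.continuousWithinAt
  obtain ⟨r, hr, hr0⟩ := isPreconnected_Ici.intermediate_value hsa hta hcont ⟨hs, ht⟩
  exact (ha r hr).2 hr0

theorem tendsto_atTop_of_le_deriv {h h' : ℝ → ℝ} {ε : ℝ} (hε : 0 < ε)
    (hd : ∀ᶠ s in atTop, HasDerivAt h (h' s) s) (hle : ∀ᶠ s in atTop, ε ≤ h' s) :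
    Tendsto h atTop atTop := by
  obtain ⟨a, ha⟩ := eventually_atTop.1 (hd.and hle)
  have hlin : Tendsto (fun s => ε * (s - a) + h a) atTop atTop :=
    tendsto_atTop_add_const_right _ _
      ((tendsto_atTop_add_const_right _ (-a) tendsto_id).const_mul_atTop hε)
  refine tendsto_atTop_mono' _ ?_ hlin
  filter_upwards [eventually_ge_atTop a] with s hs
  refine le_sub_iff_add_le.1 <| (convex_Ici a).mul_sub_le_image_sub_of_le_deriv
    (fun x hx => (ha x hx).1.continuousAt.continuousWithinAt)
    (fun x hx => (ha x (interior_subset hx)).1.differentiableAt.differentiableWithinAt)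
    (fun x hx => ?_) a Set.self_mem_Ici s hs hs
  rw [(ha x (interior_subset hx)).1.deriv]
  exact (ha x (interior_subset hx)).2

theorem eventually_lt_of_tendsto_of_deriv_pos {h h' : ℝ → ℝ} {c : ℝ}
    (hd : ∀ᶠ s in atTop, HasDerivAt h (h' s) s) (hpos : ∀ᶠ s in atTop, 0 < h' s)
    (hlim : Tendsto h atTop (𝓝 c)) : ∀ᶠ s in atTop, h s < c := by
  obtain ⟨a, ha⟩ := eventually_atTop.1 (hd.and hpos)
  have hmono : StrictMonoOn h (Set.Ici a) :=
    strictMonoOn_of_hasDerivWithinAt_pos (convex_Ici a)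
      (fun x hx => (ha x hx).1.continuousAt.continuousWithinAt)
      (fun x hx => (ha x (interior_subset hx)).1.hasDerivWithinAt)
      fun x hx => (ha x (interior_subset hx)).2
  filter_upwards [eventually_ge_atTop a] with s hs
  have hs1 : s + 1 ∈ Set.Ici a := le_add_of_le_of_nonneg hs zero_le_one
  refine (hmono hs hs1 (lt_add_one s)).trans_le (ge_of_tendsto hlim ?_)
  filter_upwards [eventually_ge_atTop (s + 1)] with t ht
  exact hmono.monotoneOn hs1 (hs1.trans ht) ht

section NormedSpace

variable [NormedSpace ℝ E] {G G' : ℝ → E} {e : E}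

theorem eventually_eq_of_tendsto_of_deriv_eq_zero (hd : ∀ᶠ s in atTop, HasDerivAt G 0 s)
    (hlim : Tendsto G atTop (𝓝 e)) : ∀ᶠ s in atTop, G s = e := by
  obtain ⟨a, ha⟩ := eventually_atTop.1 hd
  have hconst {s t : ℝ} (hs : a ≤ s) (hst : s ≤ t) : G t = G s :=
    constant_of_has_deriv_right_zero
      (fun x hx => (ha x (hs.trans hx.1)).continuousAt.continuousWithinAt)
      (fun x hx => (ha x (hs.trans hx.1)).hasDerivWithinAt) t ⟨hst, le_rfl⟩
  filter_upwards [eventually_ge_atTop a] with s hs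
  refine tendsto_nhds_unique (tendsto_const_nhds.congr' ?_) hlim
  filter_upwards [eventually_ge_atTop s] with t ht using (hconst hs ht).symm

theorem isLittleO_id_of_tendsto_deriv_zero (hd : ∀ᶠ s in atTop, HasDerivAt G (G' s) s)
    (hlim : Tendsto G' atTop (𝓝 0)) : G =o[atTop] (id : ℝ → ℝ) := by
  rw [Asymptotics.isLittleO_iff]
  intro c hc
  have hsmall : ∀ᶠ s in atTop, ‖G' s‖ ≤ c / 2 :=
    (tendsto_zero_iff_norm_tendsto_zero.1 hlim).eventually_le_const (half_pos hc)
  obtain ⟨a, ha⟩ := eventually_atTop.1 ((hd.and hsmall).and (eventually_ge_atTop 0))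
  have ha0 : 0 ≤ a := (ha a le_rfl).2
  filter_upwards [eventually_ge_atTop a,
    (tendsto_id.const_mul_atTop (half_pos hc)).eventually_ge_atTop ‖G a‖] with s hs hGa
  have hmvt : ‖G s - G a‖ ≤ c / 2 * ‖s - a‖ :=
    (convex_Ici a).norm_image_sub_le_of_norm_hasDerivWithin_le
      (fun x hx => (ha x hx).1.1.hasDerivWithinAt) (fun x hx => (ha x hx).1.2) Set.self_mem_Ici hs
  calc ‖G s‖ ≤ ‖G a‖ + ‖G s - G a‖ := norm_le_norm_add_norm_sub' _ _
    _ ≤ c / 2 * s + c / 2 * s := by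
      gcongr
      · exact hGa
      · refine hmvt.trans ?_
        gcongr
        rw [Real.norm_of_nonneg (sub_nonneg.2 hs)]
        exact sub_le_self s ha0
    _ = c * ‖id s‖ := by rw [id, Real.norm_of_nonneg (ha0.trans hs)]; ring

theorem tendsto_inv_smul_of_tendsto_deriv (hd : ∀ᶠ s in atTop, HasDerivAt G (G' s) s)
    (hlim : Tendsto G' atTop (𝓝 e)) : Tendsto (fun s => s⁻¹ • G s) atTop (𝓝 e) := by
  have hlittle : (fun s => G s - s • e) =o[atTop] (id : ℝ → ℝ) :=
    isLittleO_id_of_tendsto_deriv_zero (G' := fun s => G' s - (1 : ℝ) • e)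
      (hd.mono fun s hs => hs.sub ((hasDerivAt_id s).smul_const e))
      (by simpa using hlim.sub_const e)
  have hzero : Tendsto (fun s => s⁻¹ • (G s - s • e)) atTop (𝓝 0) :=
    hlittle.tendsto_inv_smul_nhds_zero
  refine (zero_add e ▸ hzero.add_const e).congr' ?_
  filter_upwards [eventually_ne_atTop 0] with s hs
  rw [smul_sub, inv_smul_smul₀ hs, sub_add_cancel]

theorem tendsto_norm_inv_smul_of_tendsto_deriv (hd : ∀ᶠ s in atTop, HasDerivAt G (G' s) s)
    (hlim : Tendsto G' atTop (𝓝 e)) (he : ‖e‖ = 1) :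
    Tendsto (fun s => ‖G s‖⁻¹ • G s) atTop (𝓝 e) := by
  have hlim' := tendsto_norm_inv_smul (eventually_gt_atTop 0) (norm_ne_zero_iff.1 (by simp [he]))
    (tendsto_inv_smul_of_tendsto_deriv hd hlim)
  rwa [he, inv_one, one_smul] at hlim'

end NormedSpace

theorem eq_neg_norm_smul_of_inner_pos_imp [InnerProductSpace ℝ E] {e w : E} (he : ‖e‖ = 1)
    (h : ∀ v, 0 < ⟪w, v⟫ → ⟪e, v⟫ ≤ 0) : w = -‖w‖ • e := by
  set v := w + ‖w‖ • e with hv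
  have hwv : ⟪w, v⟫ = ‖w‖ * ⟪e, v⟫ := by
    simp only [hv, inner_add_right, inner_smul_right, real_inner_self_eq_norm_sq, he,
      real_inner_comm w e]
    ring
  have hle : ⟪w, v⟫ ≤ 0 := by
    by_contra! hpos
    exact hpos.not_ge (hwv ▸ mul_nonpos_of_nonneg_of_nonpos (norm_nonneg w) (h v hpos))
  have hvv : ⟪v, v⟫ ≤ 0 := by
    calc ⟪v, v⟫ = ⟪w, v⟫ + ‖w‖ * ⟪e, v⟫ := by
          conv_lhs => rw [hv, inner_add_left, real_inner_smul_left, ← hv]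
      _ ≤ 0 := by rw [← hwv]; linarith
  rw [neg_smul, ← sub_eq_zero, sub_neg_eq_add]
  exact real_inner_self_nonpos.1 hvv

/- A vector-valued l'Hôpital rule. The sign is negative because a curve tending to `0` moves against
its own direction. -/
theorem eq_neg_norm_smul_of_tendsto_zero [InnerProductSpace ℝ E] {G G' : ℝ → E} {m : ℝ → ℝ}
    {e w : E} (hd : ∀ᶠ s in atTop, HasDerivAt G (G' s) s) (hG : Tendsto G atTop (𝓝 0))
    (he : ‖e‖ = 1) (hdir : Tendsto (fun s => ‖G s‖⁻¹ • G s) atTop (𝓝 e))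
    (hm : ∀ s, 0 ≤ m s) (hw : Tendsto (fun s => m s • G' s) atTop (𝓝 w)) : w = -‖w‖ • e := by
  refine eq_neg_norm_smul_of_inner_pos_imp he fun v hv => ?_
  have hderiv : ∀ᶠ s in atTop, HasDerivAt (fun s => ⟪G s, v⟫) ⟪G' s, v⟫ s := by
    filter_upwards [hd] with s hs
    simpa using hs.inner ℝ (hasDerivAt_const s v)
  have hpos : ∀ᶠ s in atTop, 0 < ⟪G' s, v⟫ := by
    filter_upwards [(hw.inner tendsto_const_nhds).eventually_const_lt hv] with s hs
    rw [real_inner_smul_left] at hs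
    exact pos_of_mul_pos_right hs (hm s)
  have hlim : Tendsto (fun s => ⟪G s, v⟫) atTop (𝓝 0) := by
    simpa using hG.inner (tendsto_const_nhds (x := v))
  refine le_of_tendsto (hdir.inner tendsto_const_nhds) ?_
  filter_upwards [eventually_lt_of_tendsto_of_deriv_pos hderiv hpos hlim] with s hs
  rw [real_inner_smul_left]
  exact mul_nonpos_of_nonneg_of_nonpos (inv_nonneg.2 (norm_nonneg _)) hs.le

end CurvesAtInfinity

section NonOscillatingCurves

variable {X : Type*}

/-- The algebra `𝒜` does not oscillate along the curve `γ` at infinity: each function of `𝒜`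
eventually vanishes identically along `γ` or eventually has no zero on `γ`. -/
def IsNonOscillating (𝒜 : Subalgebra ℝ (X → ℝ)) (γ : ℝ → X) : Prop :=
  ∀ g ∈ 𝒜, (∀ᶠ s in atTop, g (γ s) = 0) ∨ ∀ᶠ s in atTop, g (γ s) ≠ 0

theorem IsNonOscillating.hasEventualSigns [TopologicalSpace X] {𝒜 : Subalgebra ℝ (X → ℝ)}
    {γ : ℝ → X} (h : IsNonOscillating 𝒜 γ) (h𝒜 : ∀ g ∈ 𝒜, Continuous g)
    (hγ : ∀ᶠ s in atTop, ContinuousAt γ s) : HasEventualSigns 𝒜 (map γ atTop) := by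
  intro g hg
  simp only [eventually_map]
  rcases h g hg with h0 | h0
  · exact .inl (h0.mono fun _ => le_of_eq)
  · refine (eventually_pos_or_eventually_neg (hγ.mono fun s hs => ?_) h0).symm.imp_left
      (Eventually.mono · fun _ => le_of_lt)
    exact (h𝒜 g hg).continuousAt.comp hs

end NonOscillatingCurves

section UnitGradientCurves

variable {E : Type*} [NormedAddCommGroup E] [InnerProductSpace ℝ E]

/-- For large times, `γ` avoids the critical points of `f` and is an integral curve of the
normalized gradient field `∇f / ‖∇f‖`. -/
def IsUnitGradientCurve [CompleteSpace E] (f : E → ℝ) (γ : ℝ → E) : Prop :=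
  ∀ᶠ s in atTop, gradient f (γ s) ≠ 0 ∧ HasDerivAt γ (‖gradient f (γ s)‖⁻¹ • gradient f (γ s)) s

namespace IsUnitGradientCurve

variable {f : E → ℝ} {γ : ℝ → E} {𝒜 : Subalgebra ℝ (E → ℝ)}

theorem hasDerivAt_comp [CompleteSpace E] (hγ : IsUnitGradientCurve f γ) (hf : Differentiable ℝ f) :
    ∀ᶠ s in atTop, HasDerivAt (fun s => f (γ s)) ‖gradient f (γ s)‖ s := by
  filter_upwards [hγ] with s ⟨hreg, hode⟩
  refine ((hf (γ s)).hasGradientAt.hasFDerivAt.comp_hasDerivAt s hode).congr_deriv ?_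
  rw [map_smul, InnerProductSpace.toDual_apply_apply, real_inner_self_eq_norm_mul_norm,
    smul_eq_mul, inv_mul_cancel_left₀ (norm_ne_zero_iff.2 hreg)]

theorem tendsto_gradient [FiniteDimensional ℝ E] (hγ : IsUnitGradientCurve f γ)
    (hf : Differentiable ℝ f) (hbdd : IsBoundedUnder (· ≤ ·) atTop fun s => f (γ s))
    (h : HasEventualSigns 𝒜 (map γ atTop)) (hgrad : WeakMem 𝒜 (gradient f)) :
    Tendsto (fun s => gradient f (γ s)) atTop (𝓝 0) := by
  rw [tendsto_zero_iff_norm_tendsto_zero]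
  refine tendsto_order.2 ⟨fun ε hε => .of_forall fun s => hε.trans_le (norm_nonneg _),
    fun ε hε => ?_⟩
  rcases h.eventually_le_or_lt (algebraMap_mem 𝒜 (ε ^ 2)) hgrad.norm_sq_mem with hle | hlt
  · have hε_le : ∀ᶠ s in atTop, ε ≤ ‖gradient f (γ s)‖ :=
      (eventually_map.1 hle).mono fun s hs => le_of_sq_le_sq hs (norm_nonneg _)
    exact (not_isBoundedUnder_of_tendsto_atTop
      (tendsto_atTop_of_le_deriv hε (hγ.hasDerivAt_comp hf) hε_le) hbdd).elim
  · exact (eventually_map.1 hlt).mono fun s hs => lt_of_pow_lt_pow_left₀ 2 hε.le hs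

theorem hasDerivAt_gradient [CompleteSpace E] (hγ : IsUnitGradientCurve f γ)
    (hf : Differentiable ℝ (gradient f)) :
    ∀ᶠ s in atTop, HasDerivAt (fun s => gradient f (γ s))
      (fderiv ℝ (gradient f) (γ s) (‖gradient f (γ s)‖⁻¹ • gradient f (γ s))) s :=
  hγ.mono fun s hs => (hf (γ s)).hasFDerivAt.comp_hasDerivAt s hs.2

theorem not_eventually_fderiv_gradient_eq_zero [CompleteSpace E]
    (hγ : IsUnitGradientCurve f γ) (hf : Differentiable ℝ (gradient f))
    (hlim : Tendsto (fun s => gradient f (γ s)) atTop (𝓝 0)) :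
    ¬∀ᶠ s in atTop, fderiv ℝ (gradient f) (γ s) = 0 := by
  intro hzero
  have hderiv : ∀ᶠ s in atTop, HasDerivAt (fun s => gradient f (γ s)) 0 s := by
    filter_upwards [hγ.hasDerivAt_gradient hf, hzero] with s hs hs0
    rwa [hs0, zero_apply] at hs
  obtain ⟨s, hs, hs0⟩ := (hγ.and (eventually_eq_of_tendsto_of_deriv_eq_zero hderiv hlim)).exists
  exact hs.1 hs0

theorem exists_tendsto_secants [FiniteDimensional ℝ E] (hγ : IsUnitGradientCurve f γ)
    (h : HasEventualSigns 𝒜 (map γ atTop)) (hgrad : WeakMem 𝒜 (gradient f)) :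
    ∃ ν : E, ‖ν‖ = 1 ∧
      Tendsto (fun s => ‖gradient f (γ s)‖⁻¹ • gradient f (γ s)) atTop (𝓝 ν) ∧
      Tendsto (fun s => ‖γ s‖⁻¹ • γ s) atTop (𝓝 ν) := by
  have hne : ¬∀ᶠ x in map γ atTop, gradient f x = 0 := fun h0 =>
    let ⟨_, hs, hs0⟩ := (hγ.and (eventually_map.1 h0)).exists
    hs.1 hs0
  obtain ⟨-, ν, hν, hdir⟩ := h.exists_tendsto_norm_inv_smul hgrad hne
  exact ⟨ν, hν, tendsto_map'_iff.1 hdir, tendsto_norm_inv_smul_of_tendsto_deriv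
    (hγ.mono fun s hs => hs.2) (tendsto_map'_iff.1 hdir) hν⟩

end IsUnitGradientCurve

theorem normalized_hessian_converges_and_nu_eigenvector_at_infinity_general
    [FiniteDimensional ℝ E] {𝒜 : Subalgebra ℝ (E → ℝ)} (h𝒜 : IsDifferentialAlgebra 𝒜)
    {f : E → ℝ} (hf : f ∈ 𝒜) {γ : ℝ → E} (hγ : IsUnitGradientCurve f γ)
    (hbdd : IsBoundedUnder (· ≤ ·) atTop fun s => f (γ s)) (hosc : IsNonOscillating 𝒜 γ) :
    (∀ᶠ s in atTop, fderiv ℝ (gradient f) (γ s) ≠ 0) ∧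
    ∃ (H : E →L[ℝ] E) (ν : E), IsSelfAdjoint H ∧ ‖H‖ = 1 ∧
      Tendsto (fun s => ‖fderiv ℝ (gradient f) (γ s)‖⁻¹ • fderiv ℝ (gradient f) (γ s))
        atTop (𝓝 H) ∧
      ‖ν‖ = 1 ∧ Tendsto (fun s => ‖γ s‖⁻¹ • γ s) atTop (𝓝 ν) ∧
      H ν = -‖H ν‖ • ν := by
  have hfd := h𝒜.differentiable f hf
  have hgrad := h𝒜.weakMem_gradient hf
  have hgradd := h𝒜.differentiable_of_weakMem hgrad
  have hsign : HasEventualSigns 𝒜 (map γ atTop) :=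
    hosc.hasEventualSigns (fun g hg => (h𝒜.differentiable g hg).continuous)
      (hγ.mono fun s hs => hs.2.continuousAt)
  have hgrad0 := hγ.tendsto_gradient hfd hbdd hsign hgrad
  obtain ⟨ν, hν, hdir, hsec⟩ := hγ.exists_tendsto_secants hsign hgrad
  obtain ⟨hne, H, hH, hlim⟩ := hsign.exists_tendsto_norm_inv_smul
    (h𝒜.weakMem_fderiv hgrad hgradd) (hγ.not_eventually_fderiv_gradient_eq_zero hgradd hgrad0)
  rw [tendsto_map'_iff] at hlim
  have hself : IsSelfAdjoint H :=
    (isClosed_eq continuous_star continuous_id).mem_of_tendsto hlim <| .of_forall fun s =>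
      (IsSelfAdjoint.all _).smul (isSelfAdjoint_fderiv_gradient hfd (hgradd (γ s)))
  have heigen : H ν = -‖H ν‖ • ν :=
    eq_neg_norm_smul_of_tendsto_zero (hγ.hasDerivAt_gradient hgradd) hgrad0 hν hdir
      (fun s => inv_nonneg.2 (norm_nonneg _))
      (((continuous_fst.clm_apply continuous_snd).tendsto (H, ν)).comp (hlim.prodMk_nhds hdir))
  exact ⟨hne, H, ν, hself, hH, hlim, hν, hsec, heigen⟩

end UnitGradientCurves

section EuclideanPolynomials

variable {ι : Type*}

/-- The algebra of polynomial functions on `EuclideanSpace ℝ ι`, generated by the coordinates. -/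
def euclideanPolynomialFunctions (ι : Type*) : Subalgebra ℝ (EuclideanSpace ℝ ι → ℝ) :=
  Algebra.adjoin ℝ (Set.range fun i x => x i)

theorem mem_euclideanPolynomialFunctions {g : EuclideanSpace ℝ ι → ℝ} :
    g ∈ euclideanPolynomialFunctions ι ↔
      ∃ Q : MvPolynomial ι ℝ, ∀ x, g x = MvPolynomial.eval (fun i => x i) Q := by
  have haeval (Q : MvPolynomial ι ℝ) (x : EuclideanSpace ℝ ι) :
      MvPolynomial.aeval (fun i (x : EuclideanSpace ℝ ι) => x i) Q x =
        MvPolynomial.eval (fun i => x i) Q := by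
    induction Q using MvPolynomial.induction_on with
    | C a => simp
    | add p q hp hq => simp [hp, hq]
    | mul_X p i hp => simp [hp]
  rw [euclideanPolynomialFunctions, Algebra.adjoin_range_eq_range_aeval]
  refine exists_congr fun Q => ?_
  simp only [← haeval]
  exact eq_comm.trans funext_iff

theorem isDifferentialAlgebra_euclideanPolynomialFunctions [Fintype ι] :
    IsDifferentialAlgebra (euclideanPolynomialFunctions ι) := by
  suffices h : ∀ g ∈ euclideanPolynomialFunctions ι, Differentiable ℝ g ∧
      ∀ v, (fun x => fderiv ℝ g x v) ∈ euclideanPolynomialFunctions ι from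
    ⟨fun g hg => (h g hg).1, fun g hg => (h g hg).2⟩
  intro g hg
  induction hg using Algebra.adjoin_induction with
  | mem g hg =>
    obtain ⟨i, rfl⟩ := hg
    let φ : EuclideanSpace ℝ ι →L[ℝ] ℝ := EuclideanSpace.proj i
    refine ⟨φ.differentiable, fun v => ?_⟩
    have hφ : (fun x => fderiv ℝ φ x v) = algebraMap ℝ _ (v i) := by
      ext x
      rw [φ.fderiv]
      rfl
    exact hφ ▸ algebraMap_mem _ (v i)
  | algebraMap r =>
    refine ⟨differentiable_const r, fun v => ?_⟩
    have hr : (fun x => fderiv ℝ (algebraMap ℝ (EuclideanSpace ℝ ι → ℝ) r) x v) = 0 := by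
      ext x
      exact congr($(fderiv_const_apply r) v)
    exact hr ▸ zero_mem _
  | add g h _ _ hg hh =>
    refine ⟨hg.1.add hh.1, fun v => ?_⟩
    have hadd : (fun x => fderiv ℝ (g + h) x v) =
        (fun x => fderiv ℝ g x v) + fun x => fderiv ℝ h x v := by
      ext x
      simp [fderiv_add (hg.1 x) (hh.1 x)]
    exact hadd ▸ add_mem (hg.2 v) (hh.2 v)
  | mul g h hgm hhm hg hh =>
    refine ⟨hg.1.mul hh.1, fun v => ?_⟩
    have hmul : (fun x => fderiv ℝ (g * h) x v) =
        g * (fun x => fderiv ℝ h x v) + h * fun x => fderiv ℝ g x v := by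
      ext x
      simp [fderiv_mul (hg.1 x) (hh.1 x)]
    exact hmul ▸ add_mem (mul_mem hgm (hh.2 v)) (mul_mem hhm (hg.2 v))

end EuclideanPolynomials

/-- along a trajectory non-oscillating at infinity the Hessian is eventually
nonzero, its normalized direction converges to a self-adjoint operator `𝓗` of norm one, and the
limit of secants `ν` is an eigen-vector of `𝓗`. -/
theorem normalized_hessian_converges_and_nu_eigenvector_at_infinity
    {n : ℕ} (hn : 2 ≤ n)
    (f : EuclideanSpace ℝ (Fin n) → ℝ)
    (hfpoly : ∃ P : MvPolynomial (Fin n) ℝ, ∀ x : EuclideanSpace ℝ (Fin n),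
      f x = MvPolynomial.eval (fun i => x i) P)
    (γ : ℝ → EuclideanSpace ℝ (Fin n))
    (hγreg : ∀ s ∈ Set.Ici (0 : ℝ), gradient f (γ s) ≠ 0)
    (hγode : ∀ s ∈ Set.Ici (0 : ℝ),
      HasDerivAt γ (‖gradient f (γ s)‖⁻¹ • gradient f (γ s)) s)
    (hunbounded : Tendsto (fun s => ‖γ s‖) atTop atTop)
    (hfneg : ∀ s ∈ Set.Ici (0 : ℝ), f (γ s) < 0)
    (hfmono : StrictMonoOn (fun s => f (γ s)) (Set.Ici (0 : ℝ)))
    (hflim : Tendsto (fun s => f (γ s)) atTop (𝓝 0))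
    (hosc : ∀ g : EuclideanSpace ℝ (Fin n) → ℝ,
      (∃ Q : MvPolynomial (Fin n) ℝ, ∀ x : EuclideanSpace ℝ (Fin n),
        g x = MvPolynomial.eval (fun i => x i) Q) →
      ∃ s₀ : ℝ, (∀ s ≥ s₀, g (γ s) = 0) ∨ (∀ s ≥ s₀, g (γ s) ≠ 0))
    (ν : EuclideanSpace ℝ (Fin n)) (hν1 : ‖ν‖ = 1)
    (hνlim : Tendsto (fun s => ‖γ s‖⁻¹ • γ s) atTop (𝓝 ν))
    :
    (∀ᶠ s in atTop, fderiv ℝ (gradient f) (γ s) ≠ 0) ∧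
    ∃ H : EuclideanSpace ℝ (Fin n) →L[ℝ] EuclideanSpace ℝ (Fin n),
      (∀ u v : EuclideanSpace ℝ (Fin n), ⟪H u, v⟫ = ⟪u, H v⟫) ∧ ‖H‖ = 1 ∧
      Tendsto (fun s => ‖fderiv ℝ (gradient f) (γ s)‖⁻¹ • fderiv ℝ (gradient f) (γ s))
        atTop (𝓝 H) ∧
      ∃ lam : ℝ, H ν = lam • ν := by
  have hγ : IsUnitGradientCurve f γ := by
    filter_upwards [eventually_ge_atTop 0] with s hs using ⟨hγreg s hs, hγode s hs⟩
  have hosc' : IsNonOscillating (euclideanPolynomialFunctions (Fin n)) γ := fun g hg =>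
    (exists_or.1 (hosc g (mem_euclideanPolynomialFunctions.1 hg))).imp
      eventually_atTop.2 eventually_atTop.2
  obtain ⟨hne, H, ν', hself, hH, hlim, -, hν', heigen⟩ :=
    normalized_hessian_converges_and_nu_eigenvector_at_infinity_general
      isDifferentialAlgebra_euclideanPolynomialFunctions
      (mem_euclideanPolynomialFunctions.2 hfpoly) hγ hflim.isBoundedUnder_le hosc'
  obtain rfl := tendsto_nhds_unique hνlim hν'
  exact ⟨hne, H, ContinuousLinearMap.isSelfAdjoint_iff_isSymmetric.1 hself, hH, hlim, _, heigen⟩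
end
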